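/- arXiv:math/9705223 — 2 statements merged into one kernel-verified Lean document; each statement's English description precedes it below -/
import Mathlib

section
/- Let n \ge 2 and a \ge 1 be integers and write (1 + y + y^2 + ... + y^{a-1})^n = \sum_{k=0}^{n(a-1)} c_k y^k. Then for every integer q > an, a^n \cdot N_A(n,q,0,a) = q \cdot \sum_{k=0}^{n(a-1)} c_k \, (q-n-k)^{n-1} (an identity of rational numbers). -/
/-!
Translate a tuple so that its first entry is `0` and view the entries as points on a circle of
length `q`. Avoiding `[1 - b, a + b - 1]` means that for `i < j` the arc from `x i` to `x j` has
length at least `b` and the complementary arc length at least `a + b`. Reading the points in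
cyclic order (ties broken by index) turns such a tuple into a permutation `σ` fixing `0` together
with a vector of gaps of total `q`, each gap being at least `b` at a cyclic ascent of `σ` and at
least `b + a` elsewhere.

Subtracting `b` from every gap and dividing by `a` with remainder `e k < a` replaces these bounds
by `0` and `1`, which belong to the empty forbidden interval: every tuple based at `0` on the
circle of length `m` qualifies, and there are `m ^ (n - 1)` of them.

Hence `N_A` is `q` times the sum of `m ^ (n - 1)` over the `e` with `∑ e + a * m = q - b * n`, and
only the `e` whose sum lies in one residue class modulo `a` contribute. Since the power is a
polynomial in `∑ e` of degree less than the number `n` of coordinates, its sum over that class is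
exactly `1 / a` of its sum over all `e`, and grouping the latter by `∑ e` produces the
coefficients `c k`.
-/

open Polynomial

/-- `x` avoids the integer interval `[u, v]` in `ZMod q`. -/
def Avoids {q : ℕ} (x : ZMod q) (u v : ℤ) : Prop :=
  ∀ k : ℤ, u ≤ k → k ≤ v → x ≠ (k : ZMod q)

/-- The number of `n`-tuples over `ZMod q` all of whose pairwise differences
avoid the integer interval `[u, v]`. -/
noncomputable def N_A (n q : ℕ) (u v : ℤ) : ℕ :=
  Set.ncard {x : Fin n → ZMod q |
    ∀ i j : Fin n, i < j → Avoids (x i - x j) u v}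

open Finset

section ResidueAveraging

variable {R : Type*}

theorem sum_fin_succ_apply_sum [AddCommMonoid R] (n a : ℕ) (F : ℕ → R) :
    ∑ e : Fin (n + 1) → Fin a, F (∑ i, (e i : ℕ)) =
      ∑ j : Fin a, ∑ e : Fin n → Fin a, F (∑ i, (e i : ℕ) + j) := by
  rw [← (Fin.consEquiv fun _ => Fin a).sum_comp, Fintype.sum_prod_type]
  simp [Fin.consEquiv, Fin.sum_univ_succ, add_comm]

theorem degree_taylor_sub_lt [CommRing R] {p : R[X]} {n : ℕ} (hp : p.degree < ↑(n + 1)) (r : R) :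
    (taylor r p - p).degree < n := by
  rcases eq_or_ne p 0 with rfl | h0
  · simp
  · have hlt : (taylor r p - p).degree < p.degree := by
      simpa using degree_sub_lt_left (degree_taylor p r) (by simpa using h0)
        (leadingCoeff_taylor ..)
    exact hlt.trans_le <| degree_le_of_natDegree_le <|
      Nat.lt_succ_iff.1 ((natDegree_lt_iff_degree_lt h0).2 hp)

-- Summing over one coordinate against `h` kills constants, hence lowers the degree of `p`.
theorem sum_mul_eval_eq_zero_of_degree_lt [CommRing R] {a n : ℕ} {h : ℕ → R}
    (hsum : ∀ t, ∑ j : Fin a, h (t + j) = 0) {p : R[X]} (hp : p.degree < n) :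
    ∑ e : Fin n → Fin a, h (∑ i, (e i : ℕ)) * p.eval ((∑ i, (e i : ℕ) : ℕ) : R) = 0 := by
  induction n generalizing h p with
  | zero =>
    have hp0 : p = 0 := by simpa [Nat.WithBot.lt_zero_iff] using hp
    simp [hp0]
  | succ n ih =>
    have hdiff (j : Fin a) : ∑ e : Fin n → Fin a, h (∑ i, (e i : ℕ) + j) *
        (taylor (j : R) p - p).eval ((∑ i, (e i : ℕ) : ℕ) : R) = 0 := by
      refine ih (h := fun t => h (t + j)) (fun t => ?_) (degree_taylor_sub_lt hp _)
      simpa only [add_right_comm] using hsum (t + j)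
    have hconst : ∑ j : Fin a, ∑ e : Fin n → Fin a,
        h (∑ i, (e i : ℕ) + j) * p.eval ((∑ i, (e i : ℕ) : ℕ) : R) = 0 := by
      rw [sum_comm]
      simp only [← sum_mul, hsum, zero_mul, sum_const_zero]
    calc _ = ∑ j : Fin a, ∑ e : Fin n → Fin a, h (∑ i, (e i : ℕ) + j) *
          p.eval ((∑ i, (e i : ℕ) + j : ℕ) : R) :=
        sum_fin_succ_apply_sum n a fun t => h t * p.eval (t : R)
      _ = ∑ j : Fin a, ∑ e : Fin n → Fin a, h (∑ i, (e i : ℕ) + j) *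
            (taylor (j : R) p - p).eval ((∑ i, (e i : ℕ) : ℕ) : R) +
          ∑ j : Fin a, ∑ e : Fin n → Fin a,
            h (∑ i, (e i : ℕ) + j) * p.eval ((∑ i, (e i : ℕ) : ℕ) : R) := by
        simp only [← sum_add_distrib, ← mul_add, eval_sub, taylor_eval, sub_add_cancel,
          Nat.cast_add]
      _ = 0 := by simp only [hdiff, sum_const_zero, hconst, add_zero]

theorem card_filter_Ico_modEq_eq_one {a : ℕ} (ha : 0 < a) (t M : ℕ) :
    #{x ∈ Ico t (t + a) | x ≡ M [MOD a]} = 1 := by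
  have hper : Function.Periodic (· ≡ M [MOD a]) a := fun x => by simp [Nat.ModEq]
  rw [Nat.filter_Ico_card_eq_of_periodic _ _ _ hper, Nat.count_modEq_card _ ha]
  simp [ha]

theorem card_mul_sum_ite_modEq [CommRing R] (n a M : ℕ) :
    a * ∑ e : Fin (n + 1) → Fin a,
      (if ∑ i, (e i : ℕ) ≡ M [MOD a] then ((M : R) - (∑ i, (e i : ℕ) : ℕ)) ^ n else 0) =
    ∑ e : Fin (n + 1) → Fin a, ((M : R) - (∑ i, (e i : ℕ) : ℕ)) ^ n := by
  set h : ℕ → R := fun t => (if t ≡ M [MOD a] then (a : R) else 0) - 1 with h_def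
  have hsum (t : ℕ) : ∑ j : Fin a, h (t + j) = 0 := by
    rcases a.eq_zero_or_pos with rfl | ha
    · simp
    · calc ∑ j : Fin a, h (t + j) = ∑ x ∈ Ico t (t + a), h x := by
            rw [sum_Ico_eq_sum_range, add_tsub_cancel_left, sum_range]
        _ = #{x ∈ Ico t (t + a) | x ≡ M [MOD a]} * (a : R) - a := by
            simp [h_def, sum_sub_distrib, ← sum_filter]
        _ = 0 := by simp [card_filter_Ico_modEq_eq_one ha]
  have hdeg : ((C (M : R) - X) ^ n).degree < ↑(n + 1) := by
    have hle : ((C (M : R) - X) ^ n).natDegree ≤ n := by compute_degree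
    exact (degree_le_of_natDegree_le hle).trans_lt (by exact_mod_cast n.lt_succ_self)
  rw [← sub_eq_zero, mul_sum, ← sum_sub_distrib]
  refine (sum_congr rfl fun e _ => ?_).trans (sum_mul_eval_eq_zero_of_degree_lt hsum hdeg)
  simp only [h_def, eval_pow, eval_sub, eval_C, eval_X]
  split_ifs <;> ring

theorem sum_fin_val_le {n a : ℕ} (e : Fin n → Fin a) : ∑ i, (e i : ℕ) ≤ n * (a - 1) := by
  simpa using sum_le_card_nsmul univ (fun i => (e i : ℕ)) (a - 1) fun i _ => by lia

theorem sum_range_coeff_mul [CommSemiring R] (n a : ℕ) (F : ℕ → R) :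
    ∑ k ∈ range (n * (a - 1) + 1), (((∑ j ∈ range a, (X : ℕ[X]) ^ j) ^ n).coeff k : R) * F k =
      ∑ e : Fin n → Fin a, F (∑ i, (e i : ℕ)) := by
  have hpow : (∑ j ∈ range a, (X : ℕ[X]) ^ j) ^ n =
      ∑ e : Fin n → Fin a, X ^ ∑ i, (e i : ℕ) := by
    rw [sum_range, sum_pow']
    simp [prod_pow_eq_pow_sum]
  simp only [hpow, finsetSum_coeff, coeff_X_pow, Nat.cast_sum, sum_mul]
  rw [sum_comm]
  refine sum_congr rfl fun e _ => ?_
  simp [Nat.lt_succ_of_le (sum_fin_val_le e)]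

end ResidueAveraging

section GapVectors

variable {ι : Type*} [Fintype ι]

theorem sum_sub_mod_add_mul_sum_sub_div (a : ℕ) {α M : ℕ} {g : ι → ℕ} (hα : ∀ i, α ≤ g i)
    (hsum : ∑ i, g i = Fintype.card ι * α + M) :
    ∑ i, (g i - α) % a + a * ∑ i, (g i - α) / a = M := by
  have hsub : ∑ i, (α + (g i - α)) = Fintype.card ι * α + M := by
    simp only [Nat.add_sub_of_le (hα _), hsum]
  rw [mul_sum, ← sum_add_distrib]
  simpa [sum_add_distrib, Nat.mod_add_div] using hsub

variable [DecidableEq ι]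

/-- Vectors of natural numbers with total `Q` that are bounded below by `t`: the possible gaps
between consecutive points on a circle of length `Q`. -/
def gapVectors (t : ι → ℕ) (Q : ℕ) : Finset (ι → ℕ) :=
  {g ∈ piAntidiag univ Q | ∀ i, t i ≤ g i}

theorem mem_gapVectors {t g : ι → ℕ} {Q : ℕ} : g ∈ gapVectors t Q ↔ ∑ i, g i = Q ∧ t ≤ g := by
  simp [gapVectors, Pi.le_def]

theorem card_gapVectors_add_mul (s : ι → ℕ) (α M : ℕ) {a : ℕ} (ha : 0 < a) :
    #(gapVectors (fun i => α + a * s i) (Fintype.card ι * α + M)) =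
      ∑ e : ι → Fin a, ∑ m ∈ range (M + 1) with ∑ i, (e i : ℕ) + a * m = M,
        #(gapVectors s m) := by
  simp only [← card_sigma]
  refine card_nbij'
    (fun g => ⟨fun i => ⟨(g i - α) % a, Nat.mod_lt _ ha⟩, ∑ i, (g i - α) / a,
      fun i => (g i - α) / a⟩)
    (fun p i => α + (p.1 i + a * p.2.2 i)) ?_ ?_ ?_ ?_
  · intro g hg
    obtain ⟨hsum, hle⟩ := mem_gapVectors.1 hg
    have hdiv (i : ι) : s i ≤ (g i - α) / a := by
      rw [Nat.le_div_iff_mul_le ha, mul_comm]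
      exact Nat.le_sub_of_add_le' (hle i)
    have hM := sum_sub_mod_add_mul_sum_sub_div a (fun i => le_of_add_le_left (hle i)) hsum
    have : ∑ i, (g i - α) / a ≤ M :=
      (Nat.le_mul_of_pos_left _ ha).trans (hM ▸ Nat.le_add_left _ _)
    simp [mem_gapVectors, Pi.le_def, hdiv, hM, this]
  · rintro ⟨e, m, f⟩ hp
    simp only [mem_coe, mem_sigma, mem_univ, mem_filter, true_and, mem_gapVectors] at hp
    obtain ⟨⟨-, hM⟩, rfl, hle⟩ := hp
    refine mem_gapVectors.2 ⟨?_, fun i => ?_⟩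
    · simp [sum_add_distrib, ← mul_sum, hM]
    · have := Nat.mul_le_mul_left a (hle i)
      lia
  · intro g hg
    funext i
    have : α ≤ g i := le_of_add_le_left ((mem_gapVectors.1 hg).2 i)
    simp [Nat.mod_add_div, this]
  · rintro ⟨e, m, f⟩ hp
    simp only [mem_coe, mem_sigma, mem_univ, mem_filter, true_and, mem_gapVectors] at hp
    simp [Nat.add_mul_div_left _ _ ha, Nat.div_eq_of_lt, hp.2.1, Nat.mod_eq_of_lt]

end GapVectors

section PartialSums

variable {ι R : Type*} [AddCommMonoid R]

theorem sum_Iio_add_le_sum_Iio [LinearOrder ι] [LocallyFiniteOrderBot ι] [PartialOrder R]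
    [CanonicallyOrderedAdd R] [IsOrderedAddMonoid R] (g : ι → R) {k l : ι} (hkl : k < l) :
    ∑ j ∈ Iio k, g j + g k ≤ ∑ j ∈ Iio l, g j := by
  rw [sum_Iio_add_eq_sum_Iic]
  exact sum_le_sum_of_subset fun j hj => mem_Iio.2 ((mem_Iic.1 hj).trans_lt hkl)

theorem sum_Iio_last_add {n : ℕ} (g : Fin (n + 1) → R) :
    ∑ j ∈ Iio (Fin.last n), g j + g (Fin.last n) = ∑ j, g j := by
  rw [sum_Iio_add_eq_sum_Iic, ← Fin.top_eq_last, Iic_top]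

theorem sum_Iio_fin_succ {n : ℕ} (g : Fin (n + 1) → R) (k : Fin n) :
    ∑ j ∈ Iio k.succ, g j = ∑ j ∈ Iio k.castSucc, g j + g k.castSucc := by
  rw [sum_Iio_add_eq_sum_Iic]
  rfl

end PartialSums

section SpacedTuples

variable {n α β Q : ℕ}

/-- Tuples of points on a circle of length `Q`, represented in `[0, Q)` and based at `z 0 = 0`, for
which the arc from `z i` to `z j` has length at least `α` and the arc from `z j` to `z i` length at
least `β` whenever `i < j`. When `α ≤ β`, the condition `z i + β ≤ Q` takes care of all arcs that
wrap around `0`. -/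
def spacedTuples (n α β Q : ℕ) : Finset (Fin (n + 1) → ℕ) :=
  {z ∈ Fintype.piFinset fun _ => range (Q + 1) | z 0 = 0 ∧ (∀ i, z i + β ≤ Q) ∧
    ∀ i j, i < j → z i + α ≤ z j ∨ z j + β ≤ z i}

theorem mem_spacedTuples {z : Fin (n + 1) → ℕ} :
    z ∈ spacedTuples n α β Q ↔ z 0 = 0 ∧ (∀ i, z i + β ≤ Q) ∧
      ∀ i j, i < j → z i + α ≤ z j ∨ z j + β ≤ z i := by
  simp only [spacedTuples, mem_filter, Fintype.mem_piFinset, mem_range, and_iff_right_iff_imp]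
  intro hz i
  have := hz.2.1 i
  lia

theorem card_spacedTuples_zero_one (hQ : 0 < Q) : #(spacedTuples n 0 1 Q) = Q ^ n := by
  have htail : #(spacedTuples n 0 1 Q) = #(Fintype.piFinset fun _ : Fin n => range Q) := by
    refine card_nbij' Fin.tail (fun y => (Fin.cons 0 y : Fin (n + 1) → ℕ)) ?_ ?_ ?_ ?_
    · intro z hz
      simpa [Fin.tail] using fun i : Fin n => (mem_spacedTuples.1 hz).2.1 i.succ
    · intro y hy
      have hy' (i : Fin n) : y i < Q := by simpa using Fintype.mem_piFinset.1 hy i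
      refine mem_spacedTuples.2 ⟨rfl, Fin.cases hQ hy', fun i j _ => ?_⟩
      lia
    · intro z hz
      have h0 := (mem_spacedTuples.1 hz).1
      simpa only [h0] using Fin.cons_self_tail z
    · intro y _
      rfl
  simpa using htail

/-- The least gap allowed between the points `σ k` and `σ (k + 1)` when the points are visited in
the cyclic order `σ`: it is `α` at an ascent and `β` otherwise. Addition in `Fin (n + 1)` wraps
around, so the last gap leads back to `σ 0`. -/
def gapBound (α β : ℕ) (σ : Equiv.Perm (Fin (n + 1))) (k : Fin (n + 1)) : ℕ :=
  if σ k < σ (k + 1) then α else β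

/-- The tuple whose points, visited in the order `σ` starting at `0`, are separated by the
successive gaps `g`; the last entry of `g` closes the circle and is not used. -/
def positions (σ : Equiv.Perm (Fin (n + 1))) (g : Fin (n + 1) → ℕ) (i : Fin (n + 1)) : ℕ :=
  ∑ l ∈ Iio (σ.symm i), g l

/-- The gaps between successive points of `z` visited in the order `σ`, the last of which closes the
circle of length `Q`. Subtraction truncates, so this is meant for monotone `z ∘ σ`. -/
def gaps (Q : ℕ) (σ : Equiv.Perm (Fin (n + 1))) (z : Fin (n + 1) → ℕ) (k : Fin (n + 1)) : ℕ :=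
  (if k = Fin.last n then Q else z (σ (k + 1))) - z (σ k)

variable {σ : Equiv.Perm (Fin (n + 1))} {g z : Fin (n + 1) → ℕ} {k l : Fin (n + 1)}

theorem positions_apply_perm (σ : Equiv.Perm (Fin (n + 1))) (g : Fin (n + 1) → ℕ)
    (k : Fin (n + 1)) : positions σ g (σ k) = ∑ l ∈ Iio k, g l := by
  simp [positions]

theorem gapBound_castSucc (α β : ℕ) (σ : Equiv.Perm (Fin (n + 1))) (k : Fin n) :
    gapBound α β σ k.castSucc = if σ k.castSucc < σ k.succ then α else β := by
  simp [gapBound]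

theorem gapBound_last (α β : ℕ) (hσ : σ 0 = 0) : gapBound α β σ (Fin.last n) = β := by
  simp [gapBound, hσ]

-- If `σ l < σ k`, some step from `k` to `l` is a descent, whose gap is at least `β`.
theorem le_or_sum_Iio_add_le_of_gapBound_le (hg : gapBound α β σ ≤ g) (hkl : k ≤ l) :
    σ k ≤ σ l ∨ ∑ j ∈ Iio k, g j + β ≤ ∑ j ∈ Iio l, g j := by
  induction l using Fin.induction with
  | zero => simp [Fin.le_zero_iff.1 hkl]
  | succ l ih =>
    rcases hkl.eq_or_lt with rfl | hkl
    · simp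
    have hk : k ≤ l.castSucc := Fin.le_castSucc_iff.2 hkl
    have hstep := hg l.castSucc
    rw [gapBound_castSucc] at hstep
    rw [sum_Iio_fin_succ]
    have hmono := sum_le_sum_of_subset (f := g) (Iio_subset_Iio hk)
    rcases ih hk with h | h <;> split_ifs at hstep with hlt
    · exact .inl (h.trans hlt.le)
    all_goals lia

theorem positions_mem_spacedTuples (hαβ : α ≤ β) (hσ : σ 0 = 0)
    (hg : g ∈ gapVectors (gapBound α β σ) Q) : positions σ g ∈ spacedTuples n α β Q := by
  obtain ⟨hsum, hg⟩ := mem_gapVectors.1 hg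
  refine mem_spacedTuples.2 ⟨?_, fun i => ?_, fun i j hij => ?_⟩
  · have h0 := positions_apply_perm σ g 0
    rwa [hσ, ← bot_eq_zero, Iio_bot, sum_empty] at h0
  · obtain ⟨k, rfl⟩ := σ.surjective i
    have hlast := hg (Fin.last n)
    have hmono := sum_le_sum_of_subset (f := g) (Iio_subset_Iio k.le_last)
    rw [gapBound_last α β hσ] at hlast
    rw [positions_apply_perm, ← hsum, ← sum_Iio_last_add]
    lia
  · obtain ⟨k, rfl⟩ := σ.surjective i
    obtain ⟨l, rfl⟩ := σ.surjective j
    simp only [positions_apply_perm]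
    rcases lt_or_gt_of_ne (ne_of_apply_ne σ hij.ne) with hkl | hlk
    · have hα : α ≤ gapBound α β σ k := by unfold gapBound; split_ifs <;> lia
      exact .inl ((Nat.add_le_add_left (hα.trans (hg k)) _).trans (sum_Iio_add_le_sum_Iio g hkl))
    · exact .inr ((le_or_sum_Iio_add_le_of_gapBound_le hg hlk.le).resolve_left hij.not_ge)

theorem sort_positions (hβ : 0 < β) (hg : gapBound α β σ ≤ g) :
    Tuple.sort (positions σ g) = σ := by
  refine (Tuple.eq_sort_iff.2 ⟨fun k l hkl => ?_, fun k l hkl heq => ?_⟩).symm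
  · simp only [Function.comp_apply, positions_apply_perm]
    exact sum_le_sum_of_subset (Iio_subset_Iio hkl)
  · simp only [positions_apply_perm] at heq
    have hle := (le_or_sum_Iio_add_le_of_gapBound_le hg hkl.le).resolve_right (by lia)
    exact hle.lt_of_ne (σ.injective.ne hkl.ne)

theorem sort_apply_zero (hz : z 0 = 0) : Tuple.sort z 0 = 0 := by
  obtain ⟨hmono, hstable⟩ := (Tuple.eq_sort_iff (f := z)).1 rfl
  obtain ⟨k, hk⟩ := (Tuple.sort z).surjective 0
  rcases k.zero_le.eq_or_lt with rfl | hpos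
  · exact hk
  · have hle : z (Tuple.sort z 0) ≤ z (Tuple.sort z k) := hmono hpos.le
    have hlt := hstable 0 k hpos (by rw [hk, hz] at hle ⊢; lia)
    exact absurd (hk ▸ hlt) (Fin.not_lt_zero _)

theorem gaps_castSucc (Q : ℕ) (σ : Equiv.Perm (Fin (n + 1))) (z : Fin (n + 1) → ℕ) (k : Fin n) :
    gaps Q σ z k.castSucc = z (σ k.succ) - z (σ k.castSucc) := by
  simp [gaps, (Fin.castSucc_lt_last k).ne]

theorem gaps_last (Q : ℕ) (σ : Equiv.Perm (Fin (n + 1))) (z : Fin (n + 1) → ℕ) :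
    gaps Q σ z (Fin.last n) = Q - z (σ (Fin.last n)) := by
  simp [gaps]

theorem sum_Iio_gaps (hmono : Monotone (z ∘ σ)) (hz : z (σ 0) = 0) (k : Fin (n + 1)) :
    ∑ j ∈ Iio k, gaps Q σ z j = z (σ k) := by
  induction k using Fin.induction with
  | zero => rw [hz, ← bot_eq_zero, Iio_bot, sum_empty]
  | succ k ih =>
    rw [sum_Iio_fin_succ, ih, gaps_castSucc]
    exact Nat.add_sub_of_le (hmono k.castSucc_lt_succ.le)

theorem positions_gaps (hmono : Monotone (z ∘ σ)) (hz : z (σ 0) = 0) :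
    positions σ (gaps Q σ z) = z := by
  funext i
  rw [positions, sum_Iio_gaps hmono hz, σ.apply_symm_apply]

theorem gaps_positions (hg : ∑ j, g j = Q) : gaps Q σ (positions σ g) = g := by
  subst hg
  funext k
  cases k using Fin.lastCases with
  | last => simp [gaps_last, positions_apply_perm, ← sum_Iio_last_add]
  | cast k => simp [gaps_castSucc, positions_apply_perm, sum_Iio_fin_succ]

theorem gaps_mem_gapVectors (hβ : 0 < β) (hz : z ∈ spacedTuples n α β Q) :
    gaps Q (Tuple.sort z) z ∈ gapVectors (gapBound α β (Tuple.sort z)) Q := by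
  obtain ⟨h0, hβQ, hsep⟩ := mem_spacedTuples.1 hz
  obtain ⟨hmono, hstable⟩ := (Tuple.eq_sort_iff (f := z)).1 rfl
  have hsort0 := sort_apply_zero h0
  generalize Tuple.sort z = σ at *
  have hlast := hβQ (σ (Fin.last n))
  refine mem_gapVectors.2 ⟨?_, fun k => ?_⟩
  · rw [← sum_Iio_last_add, sum_Iio_gaps hmono (by rw [hsort0, h0]), gaps_last]
    lia
  · cases k using Fin.lastCases with
    | last =>
      rw [gapBound_last α β hsort0, gaps_last]
      lia
    | cast k =>
      have hlt := k.castSucc_lt_succ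
      have hle : z (σ k.castSucc) ≤ z (σ k.succ) := hmono hlt.le
      rw [gapBound_castSucc, gaps_castSucc]
      split_ifs with hasc
      · have := hsep _ _ hasc
        lia
      · have hdesc := (not_lt.1 hasc).lt_of_ne (σ.injective.ne hlt.ne')
        have hne : z (σ k.castSucc) ≠ z (σ k.succ) := fun h => hasc (hstable _ _ hlt h)
        have := hsep _ _ hdesc
        lia

theorem card_filter_sort_eq (hαβ : α ≤ β) (hβ : 0 < β) (hσ : σ 0 = 0) :
    #{z ∈ spacedTuples n α β Q | Tuple.sort z = σ} = #(gapVectors (gapBound α β σ) Q) := by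
  refine card_nbij' (gaps Q σ) (positions σ) ?_ ?_ ?_ ?_
  · intro z hz
    obtain ⟨hspaced, rfl⟩ := mem_filter.1 hz
    exact gaps_mem_gapVectors hβ hspaced
  · intro g hg
    exact mem_filter.2 ⟨positions_mem_spacedTuples hαβ hσ hg,
      sort_positions hβ (mem_gapVectors.1 hg).2⟩
  · intro z hz
    obtain ⟨hspaced, rfl⟩ := mem_filter.1 hz
    exact positions_gaps (Tuple.monotone_sort z) (by rw [hσ, (mem_spacedTuples.1 hspaced).1])
  · intro g hg
    exact gaps_positions (mem_gapVectors.1 hg).1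

theorem card_spacedTuples_eq_sum_card_gapVectors (hαβ : α ≤ β) (hβ : 0 < β) :
    #(spacedTuples n α β Q) =
      ∑ σ : Equiv.Perm (Fin (n + 1)) with σ 0 = 0, #(gapVectors (gapBound α β σ) Q) := by
  rw [card_eq_sum_card_fiberwise (f := Tuple.sort)
    (t := ({σ | σ 0 = 0} : Finset (Equiv.Perm (Fin (n + 1)))))
    fun z hz => by simpa using sort_apply_zero (mem_spacedTuples.1 hz).1]
  exact sum_congr rfl fun σ hσ => card_filter_sort_eq hαβ hβ (mem_filter.1 hσ).2

end SpacedTuples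

section Recursion

variable {R : Type*} {n α a M : ℕ}

theorem gapBound_add_eq (α a : ℕ) (σ : Equiv.Perm (Fin (n + 1))) :
    gapBound α (α + a) σ = fun k => α + a * gapBound 0 1 σ k := by
  funext k
  simp only [gapBound]
  split_ifs <;> simp

theorem card_spacedTuples_add_mul (n α M : ℕ) (ha : 0 < a) :
    #(spacedTuples n α (α + a) ((n + 1) * α + M)) =
      ∑ e : Fin (n + 1) → Fin a, ∑ m ∈ range (M + 1) with ∑ i, (e i : ℕ) + a * m = M,
        #(spacedTuples n 0 1 m) := by
  have hrec (σ : Equiv.Perm (Fin (n + 1))) :=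
    card_gapVectors_add_mul (gapBound 0 1 σ) α M ha
  simp only [Fintype.card_fin, ← gapBound_add_eq] at hrec
  rw [card_spacedTuples_eq_sum_card_gapVectors le_self_add (by lia)]
  simp only [card_spacedTuples_eq_sum_card_gapVectors zero_le_one zero_lt_one, hrec]
  rw [sum_comm]
  exact sum_congr rfl fun e _ => sum_comm

theorem pow_mul_sum_filter_pow [CommRing R] (n : ℕ) (ha : 0 < a) {s : ℕ} (hs : s ≤ M) :
    (a : R) ^ n * ∑ m ∈ range (M + 1) with s + a * m = M, (m : R) ^ n =
      if s ≡ M [MOD a] then ((M : R) - s) ^ n else 0 := by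
  split_ifs with hmod
  · obtain ⟨k, hk⟩ := (Nat.modEq_iff_dvd' hs).1 hmod
    obtain rfl : M = s + a * k := by lia
    have hfilter : {m ∈ range (s + a * k + 1) | s + a * m = s + a * k} = {k} := by
      refine eq_singleton_iff_unique_mem.2 ⟨?_, fun m hm => ?_⟩
      · have := Nat.le_mul_of_pos_left k ha
        simp only [mem_filter, mem_range, and_true]
        lia
      · exact Nat.eq_of_mul_eq_mul_left ha (Nat.add_left_cancel (mem_filter.1 hm).2)
    rw [hfilter]
    simp [mul_pow]
  · have hfilter : {m ∈ range (M + 1) | s + a * m = M} = ∅ := by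
      refine filter_eq_empty_iff.2 fun m _ hm => hmod ?_
      simp [← hm, Nat.ModEq]
    simp [hfilter]

theorem pow_mul_card_spacedTuples [CommRing R] (n α : ℕ) (ha : 0 < a)
    (hM : (n + 1) * (a - 1) < M) :
    (a : R) ^ (n + 1) * #(spacedTuples n α (α + a) ((n + 1) * α + M)) =
      ∑ e : Fin (n + 1) → Fin a, ((M : R) - (∑ i, (e i : ℕ) : ℕ)) ^ n := by
  have hle (e : Fin (n + 1) → Fin a) := (sum_fin_val_le e).trans_lt hM
  have hcard (e : Fin (n + 1) → Fin a) :
      ∑ m ∈ range (M + 1) with ∑ i, (e i : ℕ) + a * m = M, (#(spacedTuples n 0 1 m) : R) =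
        ∑ m ∈ range (M + 1) with ∑ i, (e i : ℕ) + a * m = M, (m : R) ^ n := by
    refine sum_congr rfl fun m hm => ?_
    have hm0 : 0 < m := Nat.pos_of_ne_zero fun h =>
      (hle e).ne (by simpa [h] using (mem_filter.1 hm).2)
    rw [card_spacedTuples_zero_one hm0, Nat.cast_pow]
  calc (a : R) ^ (n + 1) * #(spacedTuples n α (α + a) ((n + 1) * α + M))
    _ = a * ∑ e : Fin (n + 1) → Fin a, (a : R) ^ n *
          ∑ m ∈ range (M + 1) with ∑ i, (e i : ℕ) + a * m = M, (m : R) ^ n := by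
      simp only [card_spacedTuples_add_mul n α M ha, Nat.cast_sum, hcard, ← mul_sum,
        pow_succ', mul_assoc]
    _ = a * ∑ e : Fin (n + 1) → Fin a,
          if ∑ i, (e i : ℕ) ≡ M [MOD a] then ((M : R) - (∑ i, (e i : ℕ) : ℕ)) ^ n else 0 := by
      simp only [pow_mul_sum_filter_pow n ha (hle _).le]
    _ = _ := card_mul_sum_ite_modEq n a M

end Recursion

section Avoiding

variable {n α β q : ℕ}

theorem avoids_sub_iff (hα : α ≤ q) (hβ : β ≤ q) {x y : ℕ} (hx : x < q) (hy : y < q) :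
    Avoids (x - y : ZMod q) (1 - α) (β - 1) ↔
      (x + α ≤ y ∨ y + β ≤ x) ∧ y + β ≤ x + q ∧ x + α ≤ y + q := by
  have heq (k : ℤ) : (x : ZMod q) - y = k ↔ (q : ℤ) ∣ k - (x - y) := by
    rw [← ZMod.intCast_eq_intCast_iff_dvd_sub]
    push_cast
    rfl
  simp only [Avoids, ne_eq, heq]
  constructor
  · intro h
    refine ⟨?_, ?_, ?_⟩ <;> by_contra! hlt
    · exact h (x - y) (by lia) (by lia) (by simp)
    · exact h (x - y + q) (by lia) (by lia) (by simp)
    · exact h (x - y - q) (by lia) (by lia) (by simp)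
  · rintro ⟨hsep, hβ', hα'⟩ k hk hk' ⟨t, ht⟩
    obtain rfl | rfl | rfl | ht' | ht' : t = 0 ∨ t = 1 ∨ t = -1 ∨ 2 ≤ t ∨ t ≤ -2 := by lia
    · lia
    · lia
    · lia
    · nlinarith
    · nlinarith

theorem mem_spacedTuples_iff_avoids (hαβ : α ≤ β) (hβq : β ≤ q) {z : Fin (n + 1) → ℕ}
    (hz : ∀ i, z i < q) : z ∈ spacedTuples n α β q ↔
      z 0 = 0 ∧ ∀ i j, i < j → Avoids (z i - z j : ZMod q) (1 - α) (β - 1) := by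
  simp only [mem_spacedTuples, avoids_sub_iff (hαβ.trans hβq) hβq (hz _) (hz _)]
  refine and_congr_right fun h0 => ⟨fun ⟨hle, hsep⟩ i j hij => ?_, fun h => ⟨fun i => ?_, ?_⟩⟩
  · have := hsep i j hij
    have := hle i
    have := hle j
    lia
  · rcases i.zero_le.eq_or_lt with rfl | hi
    · lia
    · have := h 0 i hi
      lia
  · exact fun i j hij => (h i j hij).1

theorem N_A_eq_mul_card_spacedTuples (hαβ : α ≤ β) (hβ : 0 < β) (hβq : β ≤ q) :
    N_A (n + 1) q (1 - α) (β - 1) = q * #(spacedTuples n α β q) := by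
  have : NeZero q := ⟨by lia⟩
  have hlt {z : Fin (n + 1) → ℕ} (hz : z ∈ spacedTuples n α β q) (i : Fin (n + 1)) : z i < q := by
    have := (mem_spacedTuples.1 hz).2.1 i
    lia
  let translate : {x : Fin (n + 1) → ZMod q |
      ∀ i j, i < j → Avoids (x i - x j) (1 - α) (β - 1)} ≃ ZMod q × spacedTuples n α β q :=
    { toFun x := (x.1 0, ⟨fun i => (x.1 i - x.1 0).val,
        (mem_spacedTuples_iff_avoids hαβ hβq fun i => ZMod.val_lt _).2 ⟨by simp,
          fun i j hij => by simpa using x.2 i j hij⟩⟩)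
      invFun p := ⟨fun i => p.1 + (p.2.1 i : ZMod q), by
        simpa using ((mem_spacedTuples_iff_avoids hαβ hβq (hlt p.2.2)).1 p.2.2).2⟩
      left_inv x := by simp
      right_inv := by
        rintro ⟨x, z, hz⟩
        simp [(mem_spacedTuples.1 hz).1, ZMod.val_natCast, Nat.mod_eq_of_lt (hlt hz _)] }
  rw [N_A, ← Nat.card_coe_set_eq, Nat.card_congr translate, Nat.card_prod, Nat.card_zmod,
    Nat.card_eq_fintype_card, Fintype.card_coe]

end Avoiding

theorem statement2_general {n a q : ℕ} (b : ℕ) (hn : 1 ≤ n) (ha : 1 ≤ a)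
    (hq : (a + b - 1) * n < q) :
    (a : ℚ) ^ n * N_A n q (1 - b) (a + b - 1) =
      q * ∑ k ∈ range (n * (a - 1) + 1),
        (((∑ j ∈ range a, (X : ℕ[X]) ^ j) ^ n).coeff k : ℚ) * (q - b * n - k) ^ (n - 1) := by
  obtain ⟨n, rfl⟩ := Nat.exists_eq_add_of_le' hn
  obtain ⟨M, hM, rfl⟩ : ∃ M, (n + 1) * (a - 1) < M ∧ q = (n + 1) * b + M := by
    refine ⟨q - (n + 1) * b, ?_, ?_⟩ <;>
    · rw [Nat.sub_add_comm ha, add_mul, mul_comm, mul_comm b] at hq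
      lia
  have hβ : b + a ≤ (n + 1) * b + M := by
    have := Nat.le_mul_of_pos_left (a - 1) n.succ_pos
    have := Nat.le_mul_of_pos_left b n.succ_pos
    lia
  have hN : N_A (n + 1) ((n + 1) * b + M) (1 - b) (a + b - 1) =
      ((n + 1) * b + M) * #(spacedTuples n b (b + a) ((n + 1) * b + M)) := by
    rw [← N_A_eq_mul_card_spacedTuples le_self_add (by lia) hβ]
    push_cast
    rw [add_comm (b : ℤ)]
  rw [hN, sum_range_coeff_mul (n + 1) a
    fun k => (((n + 1) * b + M : ℕ) - b * (n + 1 : ℕ) - k : ℚ) ^ (n + 1 - 1), Nat.cast_mul,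
    mul_left_comm, pow_mul_card_spacedTuples n b ha hM]
  simp [mul_comm (b : ℚ)]

/-- Corollary 3.2 (explicit form). For `q > an`,
`a^n ⬝ N_A(n,q,0,a) = q ⬝ ∑_{k=0}^{n(a-1)} c_k (q-n-k)^(n-1)` as rational numbers,
where the `c_k` are the coefficients of `(1 + y + ... + y^(a-1))^n`. -/
theorem statement2 (n a : ℕ) (hn : 2 ≤ n) (ha : 1 ≤ a)
    (c : ℕ → ℕ)
    (hc : ∀ k, c k = (((∑ j ∈ Finset.range a, (X : Polynomial ℕ) ^ j)) ^ n).coeff k)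
    (q : ℕ) (hq : a * n < q) :
    (a : ℚ) ^ n * (N_A n q 0 (a : ℤ) : ℚ) =
      (q : ℚ) * ∑ k ∈ Finset.range (n * (a - 1) + 1),
        (c k : ℚ) * ((q : ℚ) - (n : ℚ) - (k : ℚ)) ^ (n - 1) := by
  have hgen := statement2_general (n := n) (q := q) 1 (by lia) ha (by simpa using hq)
  simpa [hc] using hgen
end

section
/- Let n \ge 2 and a \ge 1 be integers. There exists an integer N (depending on n and a) such that for every odd integer q > N the following holds. If a is even, writing g(y) := y^{2n+1} \cdot (1 + y^2 + y^4 + ... + y^{2a-2})^n \cdot (1 + y^2 + y^4 + ... + y^{a-2}) = \sum_k g_k y^k, then a^{n+1} \cdot N_{BC}(n,q,0,a) = 2 \sum_k g_k (q-k)^n. If a is odd, writing g(y) := y^{2n+1} \cdot (1 + y^2 + y^4 + ... + y^{2a-2})^n \cdot (1 + y + y^2 + ... + y^{a-1}) = \sum_k g_k y^k, then a^{n+1} \cdot N_{BC}(n,q,0,a) = \sum_k g_k (q-k)^n. -/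
open Polynomial

/-- Count for the type `B` deformation: `x_i`, `x_i - x_j` and `x_i + x_j`
all avoid `[u, v]`. -/
noncomputable def N_B (n q : ℕ) (u v : ℤ) : ℕ :=
  Set.ncard {x : Fin n → ZMod q |
    (∀ i, Avoids (x i) u v) ∧
    ∀ i j : Fin n, i < j → Avoids (x i - x j) u v ∧ Avoids (x i + x j) u v}

/-- Count for the type `C` deformation: `2x_i`, `x_i - x_j` and `x_i + x_j`
all avoid `[u, v]`. -/
noncomputable def N_C (n q : ℕ) (u v : ℤ) : ℕ :=
  Set.ncard {x : Fin n → ZMod q |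
    (∀ i, Avoids (2 * x i) u v) ∧
    ∀ i j : Fin n, i < j → Avoids (x i - x j) u v ∧ Avoids (x i + x j) u v}

/-- Count for the type `BC` deformation: `x_i`, `2x_i`, `x_i - x_j` and `x_i + x_j`
all avoid `[u, v]`. -/
noncomputable def N_BC (n q : ℕ) (u v : ℤ) : ℕ :=
  Set.ncard {x : Fin n → ZMod q |
    (∀ i, Avoids (x i) u v ∧ Avoids (2 * x i) u v) ∧
    ∀ i j : Fin n, i < j → Avoids (x i - x j) u v ∧ Avoids (x i + x j) u v}

/-- Count for the type `D` deformation: `x_i - x_j` and `x_i + x_j`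
avoid `[u, v]`. -/
noncomputable def N_D (n q : ℕ) (u v : ℤ) : ℕ :=
  Set.ncard {x : Fin n → ZMod q |
    ∀ i j : Fin n, i < j → Avoids (x i - x j) u v ∧ Avoids (x i + x j) u v}

/-- `1 + y + y^2 + ... + y^(m-1)`. -/
noncomputable def phi (m : ℕ) : ℚ[X] := ∑ i ∈ Finset.range m, X ^ i

/-- `1 + y^2 + y^4 + ... + y^(2(m-1))`. -/
noncomputable def phi2 (m : ℕ) : ℚ[X] := ∑ i ∈ Finset.range m, X ^ (2 * i)

/-- For `g = ∑_k g_k y^k`, the sum `∑_k g_k (q - k)^n`. -/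
noncomputable def polysum (g : ℚ[X]) (q n : ℕ) : ℚ :=
  ∑ k ∈ Finset.range (g.natDegree + 1), g.coeff k * ((q : ℚ) - (k : ℚ)) ^ n

/-!
For odd `q` a point of `(ZMod q)^n` without zero coordinates has coordinates `± p i` with
`0 < 2 * p i < q`. The `2 * n + 1` points `0, ± p i` cut the circle of length `q` into gaps that
are symmetric about the origin. Label the points by their signed indices in the order
`0 < 1 < ⋯ < n < -n < ⋯ < -1`. Avoiding `[0, a]` means that all gaps are positive, and that a gap
exceeds `a` wherever the labels descend. Write each gap as `1 + r + a * t` with `0 ≤ r < a`. The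
gaps `t` are those of an arbitrary configuration on a circle of length `k = ∑ t`, sorted with ties
resolved by the labels, and there are `k ^ n` such configurations. Hence `a ^ n * N_BC n q 0 a` is
the part of `∑ j, g_j * (q - j) ^ n` over the exponents `j ≡ q` modulo `a`, where
`g = X ^ (2 * n + 1) * φ(X ^ 2) ^ n * φ(X)` and `φ = 1 + X + ⋯ + X ^ (a - 1)`.

If `P` is divisible by `((1 - X ^ a) / (1 - X ^ s)) ^ (n + 1)` and `deg f ≤ n`, the sum of
`f(j) * P_j` over a residue class of exponents modulo `a` does not change when the class is shifted
by `s`. For odd `a` this applies to `g` with `s = 1`, so the residue class in the count can be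
replaced by the average over all classes. For even `a` it applies with `s = 2` to `h`, where
`g = (1 + X) * h`; as `h` has only odd exponents, half of the classes contribute nothing.
-/

section PrefixSum

open Finset

variable {ι K : Type*} [Fintype ι] [LinearOrder K]

/-- The partial sum of `e` up to and including `i`, where `ι` is listed by increasing key `κ`. -/
def prefixSum (κ : ι → K) (e : ι → ℕ) (i : ι) : ℕ := ∑ j with κ j ≤ κ i, e j

/-- The increment of `f` at `i` along the listing of `ι` by increasing key `κ`. For monotone `f` the
supremum is the value at the predecessor of `i`, or `0` at the first index. -/
def increment (κ : ι → K) (f : ι → ℕ) (i : ι) : ℕ :=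
  f i - ({j | κ j < κ i} : Finset ι).sup f

variable {κ : ι → K} {e f : ι → ℕ} {i j : ι}

theorem prefixSum_eq_sum_lt_add (hκ : Function.Injective κ) (i : ι) :
    prefixSum κ e i = ∑ j with κ j < κ i, e j + e i := by
  classical
  have hinsert : ({j | κ j ≤ κ i} : Finset ι) = insert i ({j | κ j < κ i} : Finset ι) := by
    ext j
    simp [le_iff_eq_or_lt, hκ.eq_iff]
  rw [prefixSum, hinsert, sum_insert (by simp), add_comm]

theorem le_prefixSum (i : ι) : e i ≤ prefixSum κ e i :=
  single_le_sum (fun _ _ => Nat.zero_le _) (by simp)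

theorem prefixSum_le_sum (i : ι) : prefixSum κ e i ≤ ∑ j, e j :=
  sum_le_sum_of_subset (filter_subset _ _)

theorem prefixSum_mono (h : κ i ≤ κ j) : prefixSum κ e i ≤ prefixSum κ e j :=
  sum_le_sum_of_subset (monotone_filter_right _ fun _ _ hl => hl.trans h)

theorem prefixSum_add_le (hκ : Function.Injective κ) (h : κ i < κ j) :
    prefixSum κ e i + e j ≤ prefixSum κ e j := by
  rw [prefixSum_eq_sum_lt_add hκ j]
  exact Nat.add_le_add_right
    (sum_le_sum_of_subset (monotone_filter_right _ fun _ _ hl => hl.trans_lt h)) _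

theorem prefixSum_congr_key {K' : Type*} [LinearOrder K'] {κ' : ι → K'}
    (h : ∀ i j, κ i ≤ κ j ↔ κ' i ≤ κ' j) : prefixSum κ = prefixSum κ' := by
  ext e i
  simp only [prefixSum, h]

theorem increment_congr_key {K' : Type*} [LinearOrder K'] {κ' : ι → K'}
    (h : ∀ i j, κ i < κ j ↔ κ' i < κ' j) : increment κ = increment κ' := by
  ext f i
  simp only [increment, h]

theorem prefixSum_add_mul (a : ℕ) (d e : ι → ℕ) (i : ι) :
    prefixSum κ (fun j => d j + a * e j) i = a * prefixSum κ e i + prefixSum κ d i := by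
  simp only [prefixSum, sum_add_distrib, mul_sum, add_comm]

theorem sum_increment_of_lower (hκ : Function.Injective κ) (hf : ∀ i j, κ i ≤ κ j → f i ≤ f j)
    {S : Finset ι} (hS : ∀ i ∈ S, ∀ j, κ j < κ i → j ∈ S) :
    ∑ i ∈ S, increment κ f i = S.sup f := by
  classical
  induction S using induction_on_max_value κ with
  | empty => simp
  | insert m T hm hmax ih =>
    have hT : T = ({j | κ j < κ m} : Finset ι) := by
      ext j
      refine ⟨fun hj => ?_, fun hj => ?_⟩
      · simpa using (hmax j hj).lt_of_ne (hκ.ne (ne_of_mem_of_not_mem hj hm))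
      · have hj : κ j < κ m := by simpa using hj
        exact mem_of_mem_insert_of_ne (hS m (mem_insert_self m T) j hj) (ne_of_apply_ne κ hj.ne)
    have hTlower : ∀ i ∈ T, ∀ j, κ j < κ i → j ∈ T := by
      simp only [hT, mem_filter_univ]
      exact fun i hi j hj => hj.trans hi
    have hle : T.sup f ≤ f m := Finset.sup_le fun j hj => hf j m (hmax j hj)
    rw [sum_insert hm, ih hTlower, sup_insert, increment, ← hT, sup_eq_left.2 hle,
      Nat.sub_add_cancel hle]

theorem sup_prefixSum_of_lower {S : Finset ι} (hS : ∀ i ∈ S, ∀ j, κ j ≤ κ i → j ∈ S) :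
    S.sup (prefixSum κ e) = ∑ i ∈ S, e i := by
  refine le_antisymm (Finset.sup_le fun i hi => sum_le_sum_of_subset fun j hj => ?_) ?_
  · exact hS i hi j (by simpa using hj)
  · rcases S.eq_empty_or_nonempty with rfl | hne
    · simp
    · obtain ⟨m, hm, hmax⟩ := exists_max_image S κ hne
      refine (sum_le_sum_of_subset fun j hj => ?_).trans (le_sup (f := prefixSum κ e) hm)
      simpa using hmax j hj

theorem sum_increment (hκ : Function.Injective κ) (hf : ∀ i j, κ i ≤ κ j → f i ≤ f j) :
    ∑ i, increment κ f i = univ.sup f :=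
  sum_increment_of_lower hκ hf fun _ _ _ _ => mem_univ _

theorem prefixSum_increment (hκ : Function.Injective κ) (hf : ∀ i j, κ i ≤ κ j → f i ≤ f j) :
    prefixSum κ (increment κ f) = f := by
  ext i
  rw [prefixSum, sum_increment_of_lower hκ hf (by simpa using fun j hj l hl => hl.le.trans hj)]
  exact le_antisymm (Finset.sup_le fun j hj => hf j i (by simpa using hj)) (le_sup (by simp))

theorem increment_prefixSum (hκ : Function.Injective κ) : increment κ (prefixSum κ e) = e := by
  ext i
  rw [increment, sup_prefixSum_of_lower (by simpa using fun j hj l hl => lt_of_le_of_lt hl hj),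
    prefixSum_eq_sum_lt_add hκ, Nat.add_sub_cancel_left]

end PrefixSum

section SpacedPositions

open Finset

variable {ι : Type*}

/-- Positions `p i`, each of which stands for the two points `± p i` on a circle of length `q`,
such that two consecutive ones are more than `a` apart wherever the labels `lab` descend. The origin
counts as a point whose label separates the negative labels from the others. -/
structure IsSpaced (lab : ι → ℤ) (a q : ℕ) (p : ι → ℕ) : Prop where
  pos : ∀ i, 0 < p i
  two_mul_lt : ∀ i, 2 * p i < q
  lt_of_lab_neg : ∀ i, lab i < 0 → a < p i
  add_lt_of_lab_nonneg : ∀ i, 0 ≤ lab i → 2 * p i + a < q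
  injective : Function.Injective p
  lab_lt : ∀ i j, p i < p j → p j ≤ p i + a → lab i < lab j

/-- The key that lists indices by increasing position, ties being resolved by the labels. -/
def positionKey (lab : ι → ℤ) (p : ι → ℕ) (i : ι) : ℕ ×ₗ ℤ := toLex (p i, lab i)

variable {lab : ι → ℤ} {a q k t : ℕ} {p r : ι → ℕ} {i j : ι}

theorem positionKey_injective (hlab : Function.Injective lab) :
    Function.Injective (positionKey lab p) := fun _ _ h =>
  hlab (Prod.ext_iff.1 (toLex.injective h)).2

theorem le_of_positionKey_le (h : positionKey lab p i ≤ positionKey lab p j) : p i ≤ p j :=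
  Prod.Lex.monotone_fst _ _ h

variable [Fintype ι]

/-- The positions `p`, standing for `± p i` on a circle of length `k`, that may coincide with each
other, with the origin or with the antipode of the origin. Coinciding points are ordered by their
labels, so a negative label excludes position `0`, and any other one the antipode `k / 2`. -/
noncomputable def weakPositions (lab : ι → ℤ) (k : ℕ) : Finset (ι → ℕ) := by
  classical exact Fintype.piFinset fun i => if lab i < 0 then Icc 1 (k / 2) else range ((k + 1) / 2)

/-- The quotient by `a` of the gap below `p i`, decreased by one. -/
def gapQuotient (a : ℕ) (p : ι → ℕ) (i : ι) : ℕ := (increment p p i - 1) / a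

/-- The residue modulo `a` of the gap below `p i`, decreased by one. -/
def gapDigit (a : ℕ) (p : ι → ℕ) (i : ι) : ℕ := (increment p p i - 1) % a

/-- The gap between the two points `± p i` farthest from the origin, decreased by one. -/
def antipodalGap (q : ℕ) (p : ι → ℕ) : ℕ := q - 2 * univ.sup p - 1

/-- The sum of `1 + d` over the digits `d` of all `2 * card ι + 1` gaps of a circle, where `t` is
the digit of the antipodal gap and all other gaps occur twice, by symmetry. -/
def digitWeight (r : ι → ℕ) (t : ℕ) : ℕ := 2 * Fintype.card ι + 1 + 2 * ∑ i, r i + t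

/-- The positions whose gaps are the `gapQuotient`s of `p`. -/
def compress (a : ℕ) (p : ι → ℕ) : ι → ℕ := prefixSum p (gapQuotient a p)

/-- The inverse of `compress`: every gap `g` below a position `p i` becomes `1 + r i + a * g`. -/
def dilate (lab : ι → ℤ) (a : ℕ) (r p : ι → ℕ) (i : ι) : ℕ :=
  a * p i + prefixSum (positionKey lab p) (fun j => 1 + r j) i

theorem mem_weakPositions : p ∈ weakPositions lab k ↔
    ∀ i, 2 * p i ≤ k ∧ (lab i < 0 → 0 < p i) ∧ (0 ≤ lab i → 2 * p i < k) := by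
  simp only [weakPositions, Fintype.mem_piFinset]
  refine forall_congr' fun i => ?_
  split_ifs with h <;> simp only [mem_Icc, mem_range] <;> omega

namespace IsSpaced

theorem increment_pos (h : IsSpaced lab a q p) (i : ι) : 0 < increment p p i :=
  Nat.sub_pos_of_lt <| (Finset.sup_lt_iff (h.pos i)).2 fun _ hj => (mem_filter.1 hj).2

theorem increment_eq (h : IsSpaced lab a q p) (i : ι) :
    increment p p i = 1 + gapDigit a p i + a * gapQuotient a p i := by
  have hpos := h.increment_pos i
  have hdiv := Nat.mod_add_div (increment p p i - 1) a
  rw [gapDigit, gapQuotient]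
  omega

theorem eq_compress_add (h : IsSpaced lab a q p) (i : ι) :
    p i = a * compress a p i + prefixSum p (fun j => 1 + gapDigit a p j) i := by
  rw [compress, ← prefixSum_add_mul, ← funext h.increment_eq,
    prefixSum_increment h.injective fun _ _ => id]

theorem sup_compress : univ.sup (compress a p) = ∑ i, gapQuotient a p i :=
  sup_prefixSum_of_lower fun _ _ _ _ => mem_univ _

theorem sup_eq (h : IsSpaced lab a q p) :
    univ.sup p = Fintype.card ι + ∑ i, gapDigit a p i + a * univ.sup (compress a p) := by
  rw [← sum_increment h.injective fun _ _ => id, sum_congr rfl fun i _ => h.increment_eq i,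
    sup_compress]
  simp [sum_add_distrib, mul_sum]

theorem digitWeight_add_eq (h : IsSpaced lab a q p) (hq : 0 < q) :
    digitWeight (gapDigit a p) (antipodalGap q p % a) +
      a * (2 * univ.sup (compress a p) + antipodalGap q p / a) = q := by
  have hsup : univ.sup p ≤ (q - 1) / 2 :=
    Finset.sup_le fun i _ => by have := h.two_mul_lt i; omega
  have hdiv := Nat.mod_add_div (antipodalGap q p) a
  have hgap : antipodalGap q p = q - 2 * univ.sup p - 1 := rfl
  rw [digitWeight, mul_add, mul_left_comm]
  have := h.sup_eq
  omega

theorem le_sup_add_of_gapQuotient_eq_zero (ha : 0 < a) (h0 : gapQuotient a p i = 0) :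
    p i ≤ ({j | p j < p i} : Finset ι).sup p + a := by
  rw [gapQuotient, Nat.div_eq_zero_iff_lt ha, increment] at h0
  omega

theorem lab_lt_of_compress_eq (h : IsSpaced lab a q p) (ha : 0 < a) (hlt : p i < p j)
    (heq : compress a p i = compress a p j) : lab i < lab j := by
  induction hj : p j using Nat.strong_induction_on generalizing j with
  | _ N ih =>
    subst hj
    obtain ⟨m, hm, hsup⟩ := exists_mem_eq_sup ({l | p l < p j} : Finset ι) ⟨i, by simpa using hlt⟩ p
    have him : p i ≤ p m := hsup ▸ le_sup (by simpa using hlt)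
    have hmj : p m < p j := by simpa using hm
    have hle : compress a p i ≤ compress a p m := prefixSum_mono him
    have hadd : compress a p m + gapQuotient a p j ≤ compress a p j :=
      prefixSum_add_le h.injective hmj
    have hclose := le_sup_add_of_gapQuotient_eq_zero ha (p := p) (i := j) (by omega)
    have hlab : lab m < lab j := h.lab_lt m j hmj (hsup ▸ hclose)
    rcases him.eq_or_lt with him | him
    · rwa [h.injective him]
    · exact (ih (p m) hmj him (by omega) rfl).trans hlab

theorem lab_nonneg_of_compress_eq_zero (h : IsSpaced lab a q p) (ha : 0 < a)
    (h0 : compress a p i = 0) : 0 ≤ lab i := by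
  have : Nonempty ι := ⟨i⟩
  obtain ⟨m, hm⟩ := Finite.exists_min p
  have hcompress : compress a p m ≤ compress a p i := prefixSum_mono (hm i)
  have hquot : gapQuotient a p m ≤ compress a p m := le_prefixSum m
  have hclose := le_sup_add_of_gapQuotient_eq_zero ha (p := p) (i := m) (by omega)
  rw [filter_false_of_mem fun j _ => (hm j).not_gt, sup_empty, Nat.bot_eq_zero] at hclose
  have hlab : 0 ≤ lab m := not_lt.1 fun hneg => by have := h.lt_of_lab_neg m hneg; omega
  rcases (hm i).eq_or_lt with hmi | hmi
  · rwa [← h.injective hmi]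
  · exact hlab.trans (h.lab_lt_of_compress_eq ha hmi (by omega)).le

theorem compress_mem (h : IsSpaced lab a q p) (ha : 0 < a) :
    compress a p ∈ weakPositions lab (2 * univ.sup (compress a p) + antipodalGap q p / a) := by
  refine mem_weakPositions.2 fun i => ?_
  have hle : compress a p i ≤ univ.sup (compress a p) := le_sup (mem_univ i)
  generalize hQ : antipodalGap q p / a = Q
  refine ⟨by omega, fun hneg => ?_, fun hnonneg => ?_⟩
  · exact Nat.pos_of_ne_zero fun h0 => (h.lab_nonneg_of_compress_eq_zero ha h0).not_gt hneg
  · by_contra hge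
    have hgap : antipodalGap q p < a := (Nat.div_eq_zero_iff_lt ha).1 (by omega)
    have : Nonempty ι := ⟨i⟩
    obtain ⟨m, hm⟩ := Finite.exists_max p
    have hmax : univ.sup p = p m :=
      le_antisymm (Finset.sup_le fun j _ => hm j) (le_sup (mem_univ m))
    have hneg : lab m < 0 := not_le.1 fun hnonneg => by
      have := h.add_lt_of_lab_nonneg m hnonneg
      rw [antipodalGap] at hgap
      omega
    have hmono : compress a p i ≤ compress a p m := prefixSum_mono (hm i)
    have hlem : compress a p m ≤ univ.sup (compress a p) := le_sup (mem_univ m)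
    rcases (hm i).eq_or_lt with him | him
    · rw [h.injective him] at hnonneg
      omega
    · have := h.lab_lt_of_compress_eq ha him (by omega)
      omega

theorem positionKey_compress_le_iff (h : IsSpaced lab a q p) (ha : 0 < a) (i j : ι) :
    positionKey lab (compress a p) i ≤ positionKey lab (compress a p) j ↔ p i ≤ p j := by
  have hlt : ∀ i j, p i < p j →
      positionKey lab (compress a p) i < positionKey lab (compress a p) j := fun i j hij =>
    Prod.Lex.toLex_lt_toLex.2 <| (prefixSum_mono hij.le).lt_or_eq.imp_right fun heq =>
      ⟨heq, h.lab_lt_of_compress_eq ha hij heq⟩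
  refine ⟨fun hle => not_lt.1 fun hji => (hlt j i hji).not_ge hle, fun hle => ?_⟩
  rcases hle.eq_or_lt with heq | hij
  · rw [h.injective heq]
  · exact (hlt i j hij).le

theorem dilate_compress (h : IsSpaced lab a q p) (ha : 0 < a) :
    dilate lab a (gapDigit a p) (compress a p) = p := by
  ext i
  rw [dilate, prefixSum_congr_key (h.positionKey_compress_le_iff ha), ← h.eq_compress_add]

end IsSpaced

theorem dilate_eq_prefixSum (hlab : Function.Injective lab) :
    dilate lab a r p = prefixSum (positionKey lab p)
      fun i => 1 + r i + a * increment (positionKey lab p) p i := by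
  ext i
  rw [prefixSum_add_mul, prefixSum_increment (positionKey_injective hlab)
    fun _ _ => le_of_positionKey_le, dilate]

theorem mul_add_lt_dilate (i : ι) : a * p i + r i < dilate lab a r p i := by
  have := le_prefixSum (κ := positionKey lab p) (e := fun j => 1 + r j) i
  rw [dilate]
  omega

theorem dilate_le (i : ι) : dilate lab a r p i ≤ a * p i + Fintype.card ι + ∑ j, r j := by
  have := prefixSum_le_sum (κ := positionKey lab p) (e := fun j => 1 + r j) i
  simp only [sum_add_distrib, sum_const, card_univ, smul_eq_mul, mul_one] at this
  rw [dilate]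
  omega

theorem dilate_add_lt (hlab : Function.Injective lab)
    (h : positionKey lab p i < positionKey lab p j) :
    dilate lab a r p i + a * (p j - p i) < dilate lab a r p j := by
  have hsum := prefixSum_add_le (e := fun j => 1 + r j) (positionKey_injective hlab) h
  have hmul := Nat.mul_le_mul_left a (le_of_positionKey_le h.le)
  rw [dilate, dilate, Nat.mul_sub]
  omega

theorem dilate_lt_iff (hlab : Function.Injective lab) (i j : ι) :
    dilate lab a r p i < dilate lab a r p j ↔ positionKey lab p i < positionKey lab p j := by
  refine ⟨fun h => not_le.1 fun hle => ?_, fun h => le_self_add.trans_lt (dilate_add_lt hlab h)⟩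
  rcases hle.eq_or_lt with heq | hlt
  · exact h.ne' (congrArg _ (positionKey_injective hlab heq))
  · exact h.not_gt (le_self_add.trans_lt (dilate_add_lt hlab hlt))

theorem increment_dilate (hlab : Function.Injective lab) (i : ι) :
    increment (dilate lab a r p) (dilate lab a r p) i =
      1 + r i + a * increment (positionKey lab p) p i := by
  rw [increment_congr_key (dilate_lt_iff hlab), dilate_eq_prefixSum hlab,
    increment_prefixSum (positionKey_injective hlab)]

theorem gapDigit_dilate (hlab : Function.Injective lab) (hr : ∀ i, r i < a) :
    gapDigit a (dilate lab a r p) = r := by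
  ext i
  rw [gapDigit, increment_dilate hlab, add_assoc, Nat.add_sub_cancel_left,
    Nat.add_mul_mod_self_left, Nat.mod_eq_of_lt (hr i)]

theorem compress_dilate (hlab : Function.Injective lab) (hr : ∀ i, r i < a) :
    compress a (dilate lab a r p) = p := by
  have hquot : gapQuotient a (dilate lab a r p) = increment (positionKey lab p) p := by
    ext i
    rw [gapQuotient, increment_dilate hlab, add_assoc, Nat.add_sub_cancel_left,
      Nat.add_mul_div_left _ _ (Nat.zero_lt_of_lt (hr i)), Nat.div_eq_of_lt (hr i), zero_add]
  have hkey : ∀ i j, dilate lab a r p i ≤ dilate lab a r p j ↔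
      positionKey lab p i ≤ positionKey lab p j := fun i j => by
    rw [← not_lt, dilate_lt_iff hlab, not_lt]
  rw [compress, hquot, prefixSum_congr_key hkey,
    prefixSum_increment (positionKey_injective hlab) fun _ _ => le_of_positionKey_le]

theorem sup_dilate (hlab : Function.Injective lab) :
    univ.sup (dilate lab a r p) = Fintype.card ι + ∑ i, r i + a * univ.sup p := by
  rw [dilate_eq_prefixSum hlab, sup_prefixSum_of_lower fun _ _ _ _ => mem_univ _,
    ← sum_increment (positionKey_injective hlab) fun _ _ => le_of_positionKey_le]
  simp [sum_add_distrib, mul_sum]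

theorem antipodalGap_dilate_mod (hlab : Function.Injective lab) (hp : p ∈ weakPositions lab k)
    (ht : t < a) (hq : digitWeight r t + a * k = q) :
    antipodalGap q (dilate lab a r p) % a = t := by
  have hle : 2 * univ.sup p ≤ k := by
    have : univ.sup p ≤ k / 2 :=
      Finset.sup_le fun i _ => by have := (mem_weakPositions.1 hp i).1; omega
    omega
  have hgap : antipodalGap q (dilate lab a r p) = t + a * (k - 2 * univ.sup p) := by
    have hmul := Nat.mul_le_mul_left a hle
    rw [antipodalGap, sup_dilate hlab, Nat.mul_sub, ← hq, digitWeight, mul_left_comm a 2]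
    rw [mul_left_comm] at hmul
    omega
  rw [hgap, Nat.add_mul_mod_self_left, Nat.mod_eq_of_lt ht]

theorem isSpaced_dilate (hlab : Function.Injective lab) (hp : p ∈ weakPositions lab k)
    (hq : digitWeight r t + a * k = q) : IsSpaced lab a q (dilate lab a r p) where
  pos i := (Nat.zero_le _).trans_lt (mul_add_lt_dilate i)
  two_mul_lt i := by
    have hle := dilate_le (lab := lab) (a := a) (r := r) (p := p) i
    have hmul : 2 * (a * p i) ≤ a * k := by
      rw [mul_left_comm]
      exact Nat.mul_le_mul_left a (mem_weakPositions.1 hp i).1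
    rw [digitWeight] at hq
    omega
  lt_of_lab_neg i hneg :=
    calc a ≤ a * p i := Nat.le_mul_of_pos_right a ((mem_weakPositions.1 hp i).2.1 hneg)
      _ < dilate lab a r p i := le_self_add.trans_lt (mul_add_lt_dilate i)
  add_lt_of_lab_nonneg i hnonneg := by
    have hle := dilate_le (lab := lab) (a := a) (r := r) (p := p) i
    have hmul : 2 * (a * p i) + a ≤ a * k := by
      rw [mul_left_comm, ← Nat.mul_succ]
      exact Nat.mul_le_mul_left a ((mem_weakPositions.1 hp i).2.2 hnonneg)
    rw [digitWeight] at hq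
    omega
  injective i j hij := by
    have hij' := dilate_lt_iff (a := a) (r := r) (p := p) hlab i j
    have hji := dilate_lt_iff (a := a) (r := r) (p := p) hlab j i
    exact positionKey_injective hlab
      (le_antisymm (not_lt.1 (hji.not.1 hij.not_gt)) (not_lt.1 (hij'.not.1 hij.not_lt)))
  lab_lt i j hij hclose := by
    have hkey := (dilate_lt_iff hlab i j).1 hij
    refine (Prod.Lex.toLex_lt_toLex.1 hkey).resolve_left (fun hpos => ?_) |>.2
    have hadd := dilate_add_lt (a := a) (r := r) hlab hkey
    have hmul : a ≤ a * (p j - p i) := Nat.le_mul_of_pos_right a (Nat.sub_pos_of_lt hpos)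
    omega

end SpacedPositions

section Counting

open Finset

variable {ι : Type*} [Fintype ι]

/-- The finite set of all `p` with `IsSpaced lab a q p`. -/
noncomputable def spacedPositions (lab : ι → ℤ) (a q : ℕ) : Finset (ι → ℕ) := by
  classical exact {p ∈ Fintype.piFinset fun _ => range q | IsSpaced lab a q p}

variable {lab : ι → ℤ} {a q k : ℕ} {p : ι → ℕ}

theorem mem_spacedPositions : p ∈ spacedPositions lab a q ↔ IsSpaced lab a q p := by
  simp only [spacedPositions, mem_filter, Fintype.mem_piFinset, mem_range, and_iff_right_iff_imp]
  exact fun h i => by have := h.two_mul_lt i; omega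

theorem card_weakPositions :
    #(weakPositions lab k) = ∏ i, if lab i < 0 then k / 2 else (k + 1) / 2 := by
  simp only [weakPositions, Fintype.card_piFinset]
  refine prod_congr rfl fun i _ => ?_
  split_ifs <;> simp

/-- The digits of all gaps of a configuration, the antipodal one last. -/
def gapDigits (a q : ℕ) (p : ι → ℕ) : (ι → ℕ) × ℕ := (gapDigit a p, antipodalGap q p % a)

/-- All families of base-`a` digits for the gaps of a configuration. -/
noncomputable def digitBox (ι : Type*) [Fintype ι] (a : ℕ) : Finset ((ι → ℕ) × ℕ) := by
  classical exact (Fintype.piFinset fun _ => range a) ×ˢ range a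

theorem mem_digitBox {d : (ι → ℕ) × ℕ} : d ∈ digitBox ι a ↔ (∀ i, d.1 i < a) ∧ d.2 < a := by
  simp [digitBox, Fintype.mem_piFinset]

theorem gapDigits_mem_digitBox (ha : 0 < a) (p : ι → ℕ) : gapDigits a q p ∈ digitBox ι a :=
  mem_digitBox.2 ⟨fun _ => Nat.mod_lt _ ha, Nat.mod_lt _ ha⟩

theorem digitWeight_le {d : (ι → ℕ) × ℕ} (hd : d ∈ digitBox ι a) :
    digitWeight d.1 d.2 ≤ (2 * Fintype.card ι + 1) * a := by
  rw [mem_digitBox] at hd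
  have hsum : ∑ i, (d.1 i + 1) ≤ Fintype.card ι * a := by
    simpa using sum_le_card_nsmul univ _ a fun i _ => hd.1 i
  rw [sum_add_distrib, sum_const, card_univ, smul_eq_mul, mul_one] at hsum
  rw [digitWeight, add_mul, mul_assoc]
  omega

open Classical in
theorem card_filter_gapDigits_eq (hlab : Function.Injective lab) (ha : 0 < a)
    {d : (ι → ℕ) × ℕ} (hd : d ∈ digitBox ι a) (hq : digitWeight d.1 d.2 + a * k = q) :
    #{p ∈ spacedPositions lab a q | gapDigits a q p = d} = #(weakPositions lab k) := by
  rw [mem_digitBox] at hd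
  have hq0 : 0 < q := by rw [digitWeight] at hq; omega
  refine card_nbij' (compress a) (dilate lab a d.1) (fun p hp => ?_) (fun p hp => ?_)
    (fun p hp => ?_) fun p _ => compress_dilate hlab hd.1
  · obtain ⟨hmem, rfl⟩ := mem_filter.1 hp
    have h := mem_spacedPositions.1 hmem
    have hk := Nat.eq_of_mul_eq_mul_left ha
      (Nat.add_left_cancel ((h.digitWeight_add_eq hq0).trans hq.symm))
    exact hk ▸ h.compress_mem ha
  · exact mem_filter.2 ⟨mem_spacedPositions.2 (isSpaced_dilate hlab hp hq),
      Prod.ext (gapDigit_dilate hlab hd.1) (antipodalGap_dilate_mod hlab hp hd.2 hq)⟩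
  · obtain ⟨hmem, rfl⟩ := mem_filter.1 hp
    exact (mem_spacedPositions.1 hmem).dilate_compress ha

theorem exists_digitWeight_gapDigits_add (hq : 0 < q) (hp : p ∈ spacedPositions lab a q) :
    ∃ k, digitWeight (gapDigits a q p).1 (gapDigits a q p).2 + a * k = q :=
  ⟨_, (mem_spacedPositions.1 hp).digitWeight_add_eq hq⟩

end Counting

section SignedPositions

open Finset

variable {n : ℕ}

/-- The labels of the coordinates `x_i`, where `P` is the set of positive ones. They list the signed
indices in the order `1 < ⋯ < n < -n < ⋯ < -1`, the indices in `P` getting negative labels. -/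
def signLabel (P : Finset (Fin n)) (i : Fin n) : ℤ := if i ∈ P then (i : ℤ) - n else n - i

/-- The integer with absolute value `p i` that is positive if `i ∈ P` and negative otherwise. -/
def signedPosition (P : Finset (Fin n)) (p : Fin n → ℕ) (i : Fin n) : ℤ :=
  if i ∈ P then p i else -p i

/-- The condition on the points counted by `N_BC n q 0 a`. -/
def AvoidsBC {q : ℕ} (a : ℕ) (x : Fin n → ZMod q) : Prop :=
  (∀ i, Avoids (x i) 0 a ∧ Avoids (2 * x i) 0 a) ∧
    ∀ i j : Fin n, i < j → Avoids (x i - x j) 0 a ∧ Avoids (x i + x j) 0 a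

variable {a q k : ℕ} {P : Finset (Fin n)} {p : Fin n → ℕ}

theorem signLabel_neg_iff {i : Fin n} : signLabel P i < 0 ↔ i ∈ P := by
  rw [signLabel]
  split_ifs with h <;> simp only [h, iff_true, iff_false] <;> omega

theorem signLabel_injective (P : Finset (Fin n)) : Function.Injective (signLabel P) := by
  intro i j h
  rw [signLabel, signLabel] at h
  split_ifs at h <;> omega

theorem sum_card_weakPositions_signLabel (n k : ℕ) :
    ∑ P : Finset (Fin n), #(weakPositions (signLabel P) k) = k ^ n := by
  simp only [card_weakPositions, signLabel_neg_iff, prod_ite, prod_const, filter_univ_mem,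
    ← compl_filter, card_compl]
  rw [Fintype.sum_pow_mul_eq_add_pow, Fintype.card_fin, show k / 2 + (k + 1) / 2 = k by omega]

theorem avoids_intCast_iff {m a : ℤ} (hm : |m| < q) :
    Avoids (m : ZMod q) 0 a ↔ (m < 0 ∨ a < m) ∧ a < m + q := by
  rw [abs_lt] at hm
  refine ⟨fun h => ⟨?_, ?_⟩, fun ⟨h, _⟩ k hk hka heq => ?_⟩
  · by_contra! hcon
    exact h m hcon.1 hcon.2 rfl
  · by_contra! hcon
    exact h (m + q) (by omega) hcon (by simp)
  · obtain ⟨t, ht⟩ := (ZMod.intCast_eq_intCast_iff_dvd_sub m k q).1 heq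
    rcases lt_trichotomy t 0 with ht0 | rfl | ht0 <;> [nlinarith; omega; nlinarith]

theorem avoids_signedPosition_iff {i : Fin n} (hpos : 0 < p i) (hlt : 2 * p i < q) :
    (Avoids (signedPosition P p i : ZMod q) 0 a ∧
      Avoids (2 * (signedPosition P p i : ZMod q)) 0 a) ↔
      (signLabel P i < 0 → a < p i) ∧ (0 ≤ signLabel P i → 2 * p i + a < q) := by
  have hone : |signedPosition P p i| < q := by rw [signedPosition]; grind
  have htwo : |2 * signedPosition P p i| < q := by rw [signedPosition]; grind
  rw [← Int.cast_two, ← Int.cast_mul, avoids_intCast_iff hone, avoids_intCast_iff htwo,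
    ← not_lt, signLabel_neg_iff, signedPosition]
  split_ifs <;> grind

theorem avoids_signedPosition_sub_add_iff {i j : Fin n} (hij : i < j) (hlti : 2 * p i < q)
    (hltj : 2 * p j < q)
    (hi : (signLabel P i < 0 → a < p i) ∧ (0 ≤ signLabel P i → 2 * p i + a < q))
    (hj : (signLabel P j < 0 → a < p j) ∧ (0 ≤ signLabel P j → 2 * p j + a < q)) :
    (Avoids (signedPosition P p i - signedPosition P p j : ZMod q) 0 a ∧
      Avoids (signedPosition P p i + signedPosition P p j : ZMod q) 0 a) ↔
      p i ≠ p j ∧ (p i < p j → p j ≤ p i + a → signLabel P i < signLabel P j) ∧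
        (p j < p i → p i ≤ p j + a → signLabel P j < signLabel P i) := by
  have hsub : |signedPosition P p i - signedPosition P p j| < q := by
    rw [signedPosition, signedPosition]; grind
  have hadd : |signedPosition P p i + signedPosition P p j| < q := by
    rw [signedPosition, signedPosition]; grind
  have hij' : (i : ℕ) < j := hij
  rw [← Int.cast_sub, ← Int.cast_add, avoids_intCast_iff hsub, avoids_intCast_iff hadd]
  rw [signLabel] at hi hj
  simp only [signedPosition, signLabel]
  split_ifs at * <;> omega

theorem avoidsBC_signedPosition_iff (hpos : ∀ i, 0 < p i) (hlt : ∀ i, 2 * p i < q) :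
    AvoidsBC a (fun i => (signedPosition P p i : ZMod q)) ↔ IsSpaced (signLabel P) a q p := by
  have hsingle i := avoids_signedPosition_iff (a := a) (P := P) (hpos i) (hlt i)
  constructor
  · rintro ⟨hone, hpair⟩
    replace hone i := (hsingle i).1 (hone i)
    replace hpair i j hij := (avoids_signedPosition_sub_add_iff hij (hlt i) (hlt j) (hone i)
      (hone j)).1 (hpair i j hij)
    refine ⟨hpos, hlt, fun i => (hone i).1, fun i => (hone i).2, fun i j heq => ?_,
      fun i j hlt => ?_⟩
    · by_contra hne
      rcases lt_or_gt_of_ne hne with hij | hji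
      · exact (hpair i j hij).1 heq
      · exact (hpair j i hji).1 heq.symm
    · rcases lt_or_gt_of_ne (ne_of_apply_ne p hlt.ne) with hij | hji
      · exact (hpair i j hij).2.1 hlt
      · exact (hpair j i hji).2.2 hlt
  · intro h
    have hone i := And.intro (h.lt_of_lab_neg i) (h.add_lt_of_lab_nonneg i)
    exact ⟨fun i => (hsingle i).2 (hone i), fun i j hij =>
      (avoids_signedPosition_sub_add_iff hij (hlt i) (hlt j) (hone i) (hone j)).2
        ⟨h.injective.ne hij.ne, h.lab_lt i j, h.lab_lt j i⟩⟩

theorem valMinAbs_signedPosition {i : Fin n} (hlt : 2 * p i < q) :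
    (signedPosition P p i : ZMod q).valMinAbs = signedPosition P p i := by
  have : NeZero q := ⟨by omega⟩
  rw [ZMod.valMinAbs_spec, signedPosition]
  split_ifs <;> simp only [Set.mem_Ioc, true_and] <;> omega

theorem signedPosition_injective {P' : Finset (Fin n)} {p' : Fin n → ℕ} (hpos : ∀ i, 0 < p i)
    (hpos' : ∀ i, 0 < p' i) (h : signedPosition P p = signedPosition P' p') :
    P = P' ∧ p = p' := by
  have hcoord i : (i ∈ P ↔ i ∈ P') ∧ p i = p' i := by
    have := hpos i
    have := hpos' i
    have hi := congrFun h i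
    rw [signedPosition, signedPosition] at hi
    split_ifs at hi with hP hP' <;> grind
  exact ⟨Finset.ext fun i => (hcoord i).1, funext fun i => (hcoord i).2⟩

theorem exists_signedPosition_eq (hq : Odd q) {x : Fin n → ZMod q}
    (hx : ∀ i, x i ≠ 0) : ∃ P p, (∀ i, 0 < p i) ∧ (∀ i, 2 * p i < q) ∧
      (fun i => (signedPosition P p i : ZMod q)) = x := by
  have : NeZero q := ⟨hq.pos.ne'⟩
  refine ⟨({i | 0 < (x i).valMinAbs} : Finset (Fin n)), fun i => (x i).valMinAbs.natAbs,
    fun i => ?_, fun i => ?_, funext fun i => ?_⟩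
  · simpa [Nat.pos_iff_ne_zero] using hx i
  · obtain ⟨t, rfl⟩ := hq
    have := (x i).natAbs_valMinAbs_le
    dsimp only
    omega
  · have hsigned : signedPosition {i | 0 < (x i).valMinAbs}
        (fun i => (x i).valMinAbs.natAbs) i = (x i).valMinAbs := by
      rw [signedPosition]
      simp only [mem_filter_univ]
      split_ifs <;> omega
    rw [hsigned, ZMod.coe_valMinAbs]

theorem N_BC_eq_sum_card_spacedPositions (hq : Odd q) :
    N_BC n q 0 a = ∑ P : Finset (Fin n), #(spacedPositions (signLabel P) a q) := by
  have : NeZero q := ⟨hq.pos.ne'⟩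
  rw [← card_sigma, ← Set.ncard_coe_finset, ← Set.InjOn.ncard_image
    (f := fun y : Σ _ : Finset (Fin n), Fin n → ℕ => fun i => (signedPosition y.1 y.2 i : ZMod q))]
  · change Set.ncard {x : Fin n → ZMod q | AvoidsBC a x} = _
    congr 1
    ext x
    constructor
    · intro hx
      obtain ⟨P, p, hpos, hlt, rfl⟩ := exists_signedPosition_eq hq fun i => by
        simpa using (hx.1 i).1 0 le_rfl (Int.natCast_nonneg a)
      refine ⟨⟨P, p⟩, ?_, rfl⟩
      simpa [mem_spacedPositions] using (avoidsBC_signedPosition_iff hpos hlt).1 hx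
    · rintro ⟨⟨P, p⟩, hp, rfl⟩
      have hp : IsSpaced (signLabel P) a q p := by simpa [mem_spacedPositions] using hp
      exact (avoidsBC_signedPosition_iff hp.pos hp.two_mul_lt).2 hp
  · rintro ⟨P, p⟩ hp ⟨P', p'⟩ hp' heq
    have hp : IsSpaced (signLabel P) a q p := by simpa [mem_spacedPositions] using hp
    have hp' : IsSpaced (signLabel P') a q p' := by simpa [mem_spacedPositions] using hp'
    have hsigned : ∀ i, signedPosition P p i = signedPosition P' p' i := fun i => by
      rw [← valMinAbs_signedPosition (hp.two_mul_lt i),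
        ← valMinAbs_signedPosition (hp'.two_mul_lt i)]
      exact congrArg ZMod.valMinAbs (congrFun heq i)
    obtain ⟨rfl, rfl⟩ := signedPosition_injective hp.pos hp'.pos (funext hsigned)
    rfl

end SignedPositions

section ResidueSum

open Finset

variable {R : Type*} [CommRing R] {a s m : ℕ} {f φ P : R[X]}

/-- For `P = ∑ P_j X^j`, the sum of `f(j) P_j` over the exponents `j ≡ c` modulo `a`. -/
noncomputable def residueSum (a : ℕ) (c : ZMod a) (f : R[X]) : R[X] →ₗ[R] R :=
  lsum fun j => (if (j : ZMod a) = c then f.eval (j : R) else 0) • LinearMap.id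

theorem residueSum_monomial (c : ZMod a) (f : R[X]) (j : ℕ) (t : R) :
    residueSum a c f (monomial j t) = (if (j : ZMod a) = c then f.eval (j : R) else 0) * t := by
  simp only [residueSum, lsum_apply, LinearMap.smul_apply, LinearMap.id_apply, smul_eq_mul]
  exact sum_monomial_index _ _ (mul_zero _)

theorem residueSum_X_pow (c : ZMod a) (f : R[X]) (j : ℕ) :
    residueSum a c f (X ^ j) = if (j : ZMod a) = c then f.eval (j : R) else 0 := by
  rw [← monomial_one_right_eq_X_pow, residueSum_monomial, mul_one]

theorem residueSum_zero (c : ZMod a) (P : R[X]) : residueSum a c 0 P = 0 := by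
  simp [residueSum, Polynomial.sum_def]

theorem residueSum_sub (c : ZMod a) (f g P : R[X]) :
    residueSum a c (f - g) P = residueSum a c f P - residueSum a c g P := by
  induction P using Polynomial.induction_on' with
  | add P Q hP hQ => rw [map_add, map_add, map_add, hP, hQ, add_sub_add_comm]
  | monomial j t => simp only [residueSum_monomial, eval_sub]; split_ifs <;> ring

theorem residueSum_X_pow_mul (c : ZMod a) (m : ℕ) (f P : R[X]) :
    residueSum a (c + m) f (X ^ m * P) = residueSum a c (taylor (m : R) f) P := by
  induction P using Polynomial.induction_on' with
  | add P Q hP hQ => rw [mul_add, map_add, map_add, hP, hQ]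
  | monomial j t =>
    rw [X_pow_mul_monomial, residueSum_monomial, residueSum_monomial, taylor_eval]
    push_cast
    simp only [add_left_inj]

theorem sum_residueSum [NeZero a] (f P : R[X]) :
    ∑ c : ZMod a, residueSum a c f P = P.sum fun j t => f.eval (j : R) * t := by
  simp only [residueSum, lsum_apply, Polynomial.sum_def, LinearMap.smul_apply, LinearMap.id_apply,
    smul_eq_mul]
  rw [sum_comm]
  simp

theorem residueSum_X_pow_mul_expand_eq_zero {p k : ℕ} (hp : p ∣ a) (h : ¬ k ≡ m [MOD p])
    (f G : R[X]) : residueSum a (k : ZMod a) f (X ^ m * expand R p G) = 0 := by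
  induction G using Polynomial.induction_on' with
  | add G H hG hH => rw [map_add, mul_add, map_add, hG, hH, add_zero]
  | monomial j t =>
    rw [expand_monomial, X_pow_mul_monomial, residueSum_monomial, if_neg, zero_mul]
    rw [ZMod.natCast_eq_natCast_iff]
    intro heq
    refine h ((heq.of_dvd hp).symm.trans ?_)
    simp [Nat.ModEq]

theorem degree_taylor_sub_lt_s5 (r : R) (hf : f.degree < (m + 1 : ℕ)) :
    (taylor r f - f).degree < m := by
  rcases eq_or_ne f 0 with rfl | hf0
  · simp
  · have hlt : (taylor r f - f).degree < (taylor r f).degree :=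
      degree_sub_lt_left (degree_taylor f r) (by simpa using hf0) (leadingCoeff_taylor r f)
    rw [degree_taylor, degree_eq_natDegree hf0] at hlt
    rw [degree_eq_natDegree hf0, Nat.cast_lt, Nat.lt_succ_iff] at hf
    exact hlt.trans_le (Nat.cast_le.2 hf)

theorem periodic_of_periodic_sub {A M : Type*} [AddMonoid A] [AddCommGroup M]
    [IsAddTorsionFree M] {u : A → M} {s : A} (hs : IsOfFinAddOrder s)
    (h : Function.Periodic (fun c => u (c + s) - u c) s) : Function.Periodic u s := by
  -- Along the multiples of `s` the values of `u` form an arithmetic progression that closes up.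
  intro c
  have harith : ∀ t : ℕ, u (c + t • s) = u c + t • (u (c + s) - u c) := by
    intro t
    induction t with
    | zero => simp
    | succ t ih =>
      have hstep : u (c + t • s + s) - u (c + t • s) = u (c + s) - u c := h.nsmul t c
      rw [succ_nsmul, succ_nsmul, ← add_assoc, ← add_assoc, ← ih, ← hstep, add_sub_cancel]
  have hzero : addOrderOf s • (u (c + s) - u c) = 0 := by
    simpa [addOrderOf_nsmul_eq_zero] using harith (addOrderOf s)
  exact sub_eq_zero.1 ((smul_eq_zero.1 hzero).resolve_left hs.addOrderOf_pos.ne')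

theorem residueSum_periodic [IsAddTorsionFree R] [NeZero a] (hφ : (1 - X ^ s) * φ = 1 - X ^ a)
    (hf : f.degree < m) (hP : φ ^ m ∣ P) :
    Function.Periodic (fun c => residueSum a c f P) (s : ZMod a) := by
  induction m generalizing f P with
  | zero =>
    obtain rfl : f = 0 := by simpa using hf
    simp [Function.Periodic, residueSum_zero]
  | succ m ih =>
    obtain ⟨Q, rfl⟩ := hP
    have hPQ : φ ^ (m + 1) * Q - X ^ s * (φ ^ (m + 1) * Q) =
        φ ^ m * Q - X ^ a * (φ ^ m * Q) := by
      linear_combination φ ^ m * Q * hφ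
    -- The differences are residue sums for `taylor r f - f`, whose degree has dropped.
    refine periodic_of_periodic_sub (isOfFinAddOrder_of_finite _) ?_
    have hdiff : ∀ c : ZMod a,
        residueSum a (c + s) f (φ ^ (m + 1) * Q) - residueSum a c f (φ ^ (m + 1) * Q) =
          residueSum a c (taylor (s : R) f - f) (φ ^ (m + 1) * Q) -
            residueSum a (c + s) (taylor (a : R) f - f) (φ ^ m * Q) := fun c => by
      have hres := congrArg (residueSum a (c + s) f) hPQ
      have hwrap := residueSum_X_pow_mul (c + (s : ZMod a)) a f (φ ^ m * Q)
      rw [ZMod.natCast_self, add_zero] at hwrap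
      rw [map_sub, map_sub, residueSum_X_pow_mul, hwrap] at hres
      rw [residueSum_sub, residueSum_sub]
      linear_combination hres
    rw [funext hdiff]
    have hdrop r := degree_taylor_sub_lt_s5 r hf
    exact (ih (hdrop s) (dvd_mul_of_dvd_left (pow_dvd_pow φ m.le_succ) Q)).sub
      ((ih (hdrop a) (dvd_mul_right _ Q)).add_const s)

theorem smul_sum_eq_smul_sum_range {M : Type*} [AddCommGroup M] [NeZero a] {u : ZMod a → M}
    (hu : Function.Periodic u (s : ZMod a)) (c : ZMod a) :
    s • ∑ x, u x = a • ∑ i ∈ range s, u (c + i) := by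
  have hstep : Function.Periodic (fun x => ∑ i ∈ range s, u (x + i)) 1 := fun x => by
    have hsucc := (sum_range_succ' (fun i : ℕ => u (x + i)) s).symm.trans (sum_range_succ _ s)
    rw [hu, Nat.cast_zero, add_zero] at hsucc
    simpa [add_assoc, add_comm (1 : ZMod a)] using hsucc
  have hconst : ∀ x, ∑ i ∈ range s, u (x + i) = ∑ i ∈ range s, u (c + i) := fun x => by
    simpa using hstep.nat_mul (x - c).val c
  have hshift (i : ℕ) : ∑ x, u (x + i) = ∑ x, u x :=
    Equiv.sum_comp (Equiv.addRight (i : ZMod a)) u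
  calc s • ∑ x, u x = ∑ i ∈ range s, ∑ x, u (x + i) := by
        simp [hshift]
    _ = ∑ x, ∑ i ∈ range s, u (x + i) := sum_comm
    _ = a • ∑ i ∈ range s, u (c + i) := by simp [hconst, ZMod.card]

end ResidueSum

section GeneratingFunction

open Finset

variable {ι : Type*} [Fintype ι] {n a q : ℕ}

theorem one_sub_X_mul_phi (a : ℕ) : (1 - X) * phi a = 1 - X ^ a :=
  mul_neg_geom_sum X a

theorem phi2_eq_expand_phi (a : ℕ) : phi2 a = expand ℚ 2 (phi a) := by
  simp [phi, phi2, map_sum, pow_mul]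

theorem one_sub_X_sq_mul_phi2 (a : ℕ) : (1 - X ^ 2) * phi2 a = 1 - X ^ (2 * a) := by
  simpa [phi2_eq_expand_phi, ← pow_mul] using congrArg (expand ℚ 2) (one_sub_X_mul_phi a)

theorem phi_two_mul (a : ℕ) : phi (2 * a) = (1 + X) * phi2 a := by
  induction a with
  | zero => simp [phi, phi2]
  | succ a ih =>
    rw [phi] at ih
    rw [phi, phi2, mul_add_one, sum_range_succ, sum_range_succ, ih, sum_range_succ, ← phi2]
    ring

theorem phi2_dvd_phi2_two_mul (a : ℕ) : phi2 a ∣ phi2 (2 * a) := by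
  refine ⟨1 + X ^ (2 * a), ?_⟩
  rw [phi2, phi2, two_mul a, sum_range_add, ← two_mul, mul_one_add, sum_mul]
  simp only [mul_add, pow_add, mul_comm (X ^ (2 * a))]

theorem phi_dvd_phi2 (ha : Odd a) : phi a ∣ phi2 a := by
  refine ⟨∑ i ∈ range a, (-X) ^ i, ?_⟩
  have hne : (1 - X ^ 2 : ℚ[X]) ≠ 0 := fun h => by simpa using congrArg (eval 0) h
  refine mul_left_cancel₀ hne ?_
  have halternating := mul_neg_geom_sum (-X : ℚ[X]) a
  rw [ha.neg_pow] at halternating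
  rw [one_sub_X_sq_mul_phi2]
  linear_combination (-1 - X ^ a) * one_sub_X_mul_phi a - (1 - X) * phi a * halternating

theorem X_pow_mul_phi2_pow_mul_phi (ι : Type*) [Fintype ι] (a : ℕ) :
    X ^ (2 * Fintype.card ι + 1) * phi2 a ^ Fintype.card ι * phi a =
      ∑ d ∈ digitBox ι a, (X : ℚ[X]) ^ digitWeight d.1 d.2 := by
  classical
  have hpow : phi2 a ^ Fintype.card ι =
      ∑ r ∈ Fintype.piFinset fun _ : ι => range a, (X : ℚ[X]) ^ (2 * ∑ i, r i) := by
    rw [← card_univ, ← prod_const, phi2, prod_univ_sum]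
    simp only [prod_pow_eq_pow_sum, mul_sum]
  rw [digitBox, sum_product, hpow, phi, mul_assoc, sum_mul_sum, mul_sum]
  simp only [mul_sum, ← pow_add, digitWeight, add_assoc]

theorem residueSum_X_pow_mul_phi2_eq_zero {k m : ℕ} (ha : Even a) (h : ¬ k ≡ m [MOD 2]) (f : ℚ[X])
    (n b : ℕ) : residueSum a (k : ZMod a) f (X ^ m * phi2 a ^ n * phi2 b) = 0 := by
  rw [phi2_eq_expand_phi, phi2_eq_expand_phi, mul_assoc, ← map_pow, ← map_mul]
  exact residueSum_X_pow_mul_expand_eq_zero ha.two_dvd h f _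

theorem degree_C_sub_X_pow_lt {R : Type*} [CommRing R] (r : R) (n : ℕ) :
    ((C r - X) ^ n).degree < ((n + 1 : ℕ) : WithBot ℕ) := by
  have hone : (C r - X).natDegree ≤ 1 := (natDegree_sub_le _ _).trans (by simp [natDegree_X_le])
  have hpow : ((C r - X) ^ n).natDegree ≤ n := by simpa using natDegree_pow_le_of_le n hone
  exact degree_le_natDegree.trans_lt (Nat.cast_lt.2 (Nat.lt_succ_of_le hpow))

theorem polysum_eq_sum_residueSum [NeZero a] (g : ℚ[X]) (q n : ℕ) :
    polysum g q n = ∑ c : ZMod a, residueSum a c ((C (q : ℚ) - X) ^ n) g := by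
  rw [sum_residueSum, polysum, sum_over_range _ fun _ => mul_zero _]
  simp [mul_comm]

theorem pow_mul_sum_card_filter_gapDigits (ha : 0 < a) {d : (Fin n → ℕ) × ℕ}
    (hd : d ∈ digitBox (Fin n) a) (hq : (2 * n + 1) * a ≤ q) :
    a ^ n * ∑ P, #{p ∈ spacedPositions (signLabel P) a q | gapDigits a q p = d} =
      if (digitWeight d.1 d.2 : ZMod a) = q then (q - digitWeight d.1 d.2) ^ n else 0 := by
  have hle : digitWeight d.1 d.2 ≤ q := by simpa using (digitWeight_le hd).trans (by simpa using hq)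
  have hq0 : 0 < q := (Nat.mul_pos (by omega) ha).trans_le hq
  simp only [ZMod.natCast_eq_natCast_iff, Nat.modEq_iff_dvd' hle]
  split_ifs with hdvd
  · obtain ⟨k, hk⟩ := hdvd
    have hk' : digitWeight d.1 d.2 + a * k = q := by omega
    simp only [card_filter_gapDigits_eq (signLabel_injective _) ha hd hk',
      sum_card_weakPositions_signLabel, hk, mul_pow]
  · refine mul_eq_zero_of_right _ (sum_eq_zero fun P _ => card_eq_zero.2 ?_)
    refine filter_eq_empty_iff.2 ?_
    rintro p hp rfl
    obtain ⟨k, hk⟩ := exists_digitWeight_gapDigits_add hq0 hp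
    exact hdvd ⟨k, by omega⟩

theorem pow_mul_N_BC_eq_residueSum (ha : 0 < a) (hodd : Odd q) (hq : (2 * n + 1) * a ≤ q) :
    (a : ℚ) ^ n * N_BC n q 0 a = residueSum a (q : ZMod a) ((C (q : ℚ) - X) ^ n)
      (X ^ (2 * n + 1) * phi2 a ^ n * phi a) := by
  have hfiber (P : Finset (Fin n)) : #(spacedPositions (signLabel P) a q) =
      ∑ d ∈ digitBox (Fin n) a, #{p ∈ spacedPositions (signLabel P) a q | gapDigits a q p = d} :=
    card_eq_sum_card_fiberwise fun p _ => gapDigits_mem_digitBox ha p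
  have hgen := X_pow_mul_phi2_pow_mul_phi (Fin n) a
  rw [Fintype.card_fin] at hgen
  rw [N_BC_eq_sum_card_spacedPositions hodd, sum_congr rfl fun P _ => hfiber P, sum_comm, hgen,
    map_sum, Nat.cast_sum, mul_sum]
  refine sum_congr rfl fun d hd => ?_
  have hle : digitWeight d.1 d.2 ≤ q := (digitWeight_le hd).trans (by simpa using hq)
  have hcount := congrArg (Nat.cast (R := ℚ)) (pow_mul_sum_card_filter_gapDigits ha hd hq)
  push_cast [Nat.cast_sub hle] at hcount ⊢
  rw [hcount, residueSum_X_pow]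
  simp

theorem pow_succ_mul_N_BC_of_odd (ha : Odd a) (hodd : Odd q) (hq : (2 * n + 1) * a ≤ q) :
    (a : ℚ) ^ (n + 1) * N_BC n q 0 a =
      polysum (X ^ (2 * n + 1) * phi2 a ^ n * phi a) q n := by
  have : NeZero a := ⟨ha.pos.ne'⟩
  have hdvd : phi a ^ (n + 1) ∣ X ^ (2 * n + 1) * phi2 a ^ n * phi a := by
    rw [pow_succ]
    exact mul_dvd_mul_right (dvd_mul_of_dvd_right (pow_dvd_pow_of_dvd (phi_dvd_phi2 ha) n) _) _
  have hperiodic := residueSum_periodic (a := a) (s := 1) (by rw [pow_one, one_sub_X_mul_phi])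
    (degree_C_sub_X_pow_lt (q : ℚ) n) hdvd
  have havg := smul_sum_eq_smul_sum_range hperiodic (q : ZMod a)
  rw [← polysum_eq_sum_residueSum] at havg
  rw [pow_succ', mul_assoc, pow_mul_N_BC_eq_residueSum ha.pos hodd hq]
  simpa using havg.symm

theorem pow_succ_mul_N_BC_of_even (ha : Even a) (ha0 : 0 < a) (hodd : Odd q)
    (hq : (2 * n + 1) * a ≤ q) :
    (a : ℚ) ^ (n + 1) * N_BC n q 0 a =
      2 * polysum (X ^ (2 * n + 1) * phi2 a ^ n * phi2 (a / 2)) q n := by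
  have : NeZero a := ⟨ha0.ne'⟩
  obtain ⟨b, hb⟩ := ha.two_dvd
  rw [show a / 2 = b by omega]
  set g := X ^ (2 * n + 1) * phi2 a ^ n * phi2 b with hg
  have hdvd : phi2 b ^ (n + 1) ∣ g := by
    rw [pow_succ, hg, hb]
    exact mul_dvd_mul_right
      (dvd_mul_of_dvd_right (pow_dvd_pow_of_dvd (phi2_dvd_phi2_two_mul b) n) _) _
  have hperiodic := residueSum_periodic (a := a) (s := 2) (by rw [one_sub_X_sq_mul_phi2, hb])
    (degree_C_sub_X_pow_lt (q : ℚ) n) hdvd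
  have havg := smul_sum_eq_smul_sum_range hperiodic (q : ZMod a)
  have hnext : residueSum a ((q : ZMod a) + 1) ((C (q : ℚ) - X) ^ n) g = 0 := by
    rw [← Nat.cast_succ]
    exact residueSum_X_pow_mul_phi2_eq_zero ha (by rw [Nat.ModEq]; grind) _ n b
  have hshifted : residueSum a (q : ZMod a) ((C (q : ℚ) - X) ^ n) (X * g) = 0 := by
    rw [hg, ← mul_assoc, ← mul_assoc, ← pow_succ']
    exact residueSum_X_pow_mul_phi2_eq_zero ha (by rw [Nat.ModEq]; grind) _ n b
  have hsplit : X ^ (2 * n + 1) * phi2 a ^ n * phi a = g + X * g := by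
    rw [hg]
    nth_rw 2 [hb]
    rw [phi_two_mul]
    ring
  rw [← polysum_eq_sum_residueSum, sum_range_succ, sum_range_one, Nat.cast_zero, add_zero,
    Nat.cast_one, hnext, add_zero] at havg
  rw [pow_succ', mul_assoc, pow_mul_N_BC_eq_residueSum ha0 hodd hq, hsplit, map_add, hshifted]
  simpa using havg.symm

end GeneratingFunction

/-- Proposition 4.1. Formula for the number of points avoiding the
`BC_n` deformation with hyperplanes `x_i, 2x_i, x_i ± x_j = 0, 1, ..., a`,
for all large odd `q`. -/
theorem statement5 (n a : ℕ) (hn : 2 ≤ n) (ha : 1 ≤ a) :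
    ∃ N : ℕ, ∀ q : ℕ, Odd q → N < q →
      (Even a →
        (a : ℚ) ^ (n + 1) * (N_BC n q 0 (a : ℤ) : ℚ) =
          2 * polysum (X ^ (2 * n + 1) * (phi2 a) ^ n * phi2 (a / 2)) q n) ∧
      (Odd a →
        (a : ℚ) ^ (n + 1) * (N_BC n q 0 (a : ℤ) : ℚ) =
          polysum (X ^ (2 * n + 1) * (phi2 a) ^ n * phi a) q n) := by
  refine ⟨(2 * n + 1) * a, fun q hq hlt => ⟨fun heven => ?_, fun hodd => ?_⟩⟩
  · exact pow_succ_mul_N_BC_of_even heven ha hq hlt.le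
  · exact pow_succ_mul_N_BC_of_odd hodd hq hlt.le
end
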